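/- arXiv:2106.08099 — 2 statements merged into one kernel-verified Lean document; each statement's English description precedes it below -/
import Mathlib

section
/- Let 𝔥 : ℝ² → ℝ be nonnegative, convex and positively 1-homogeneous, and let τ₁, τ₂ : [0,1] → ℝ² be injective Lipschitz paths such that τ₁(0) = τ₂(1) = P, τ₁(1) = τ₂(0) = Q with P ≠ Q, and such that τ₁ and τ₂ have no intersection except the points P and Q (i.e., τ₁(s) = τ₂(t) implies (s,t) = (0,1) or (s,t) = (1,0)). Let R denote the closed region enclosed by τ₁ ∪ τ₂, namely the complement in ℝ² of the unbounded connected component of ℝ² \ (τ₁([0,1]) ∪ τ₂([0,1])). Then there exists an injective Lipschitz path τ : [0,1] → ℝ² with τ(0) = P, τ(1) = Q, entirely contained in R, such that, setting τ̂(t) = τ(1−t), one has len(τ) + len(τ̂) ≤ len(τ₁) + len(τ₂). -/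
/-- The total increment over `[0, 1]` of a continuous logarithm of `p - z`
(and `0` if no such logarithm exists). -/
noncomputable def logIncrement (p : ℝ → ℂ) (z : ℂ) : ℂ :=
  open Classical in
  if h : ∃ θ : ℝ → ℂ, Continuous θ ∧ ∀ x, Complex.exp (θ x) = p x - z then
    h.choose 1 - h.choose 0
  else 0

/-- On a preconnected set, a continuous function with constant exponential is constant. -/
lemma eq_of_exp_eq_of_isPreconnected {X : Type*} [TopologicalSpace X] {S : Set X}
    (hS : IsPreconnected S) {f : X → ℂ} (hf : ContinuousOn f S) {c : ℂ}
    (hc : ∀ x ∈ S, Complex.exp (f x) = c) {x y : X} (hx : x ∈ S) (hy : y ∈ S) : f x = f y := by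
  have key := Complex.isCoveringMap_exp.eqOn_of_comp_eqOn hS hf
    (continuousOn_const (c := f y)) (fun w hw => Subtype.ext ?_) hy rfl
  · exact key hx
  · simp [hc w hw, hc y hy]

lemma logIncrement_eq {p : ℝ → ℂ} {z : ℂ} {θ : ℝ → ℂ} (hθ : Continuous θ)
    (h : ∀ x, Complex.exp (θ x) = p x - z) : logIncrement p z = θ 1 - θ 0 := by
  have hex : ∃ θ : ℝ → ℂ, Continuous θ ∧ ∀ x, Complex.exp (θ x) = p x - z := ⟨θ, hθ, h⟩
  rw [logIncrement, dif_pos hex]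
  obtain ⟨hc, he⟩ := hex.choose_spec
  have := eq_of_exp_eq_of_isPreconnected (isPreconnected_univ (α := ℝ))
    (f := fun x => hex.choose x - θ x) (hc.sub hθ).continuousOn (c := 1)
    (fun x _ => by
      rw [Complex.exp_sub, he, ← h]; exact div_self (Complex.exp_ne_zero _))
    (Set.mem_univ 1) (Set.mem_univ 0)
  linear_combination this

lemma exists_continuous_log {p : ℝ → ℂ} (hp : Continuous p) {z : ℂ} (hz : ∀ x, p x ≠ z) :
    ∃ θ : ℝ → ℂ, Continuous θ ∧ ∀ x, Complex.exp (θ x) = p x - z := by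
  obtain ⟨F, ⟨-, hF⟩, -⟩ := Complex.isCoveringMapOn_exp.existsUnique_continuousMap_lifts
    (⟨fun x => p x - z, by fun_prop⟩ : C(ℝ, ℂ)) (a₀ := 0)
    (Complex.exp_log (sub_ne_zero.2 (hz 0))) (fun x => sub_ne_zero.2 (hz x))
  exact ⟨F, F.continuous, fun x => congrFun hF x⟩

lemma exp_logIncrement {p : ℝ → ℂ} (hp : Continuous p) {z : ℂ} (hz : ∀ x, p x ≠ z) :
    Complex.exp (logIncrement p z) = (p 1 - z) / (p 0 - z) := by
  obtain ⟨θ, hθ, h⟩ := exists_continuous_log hp hz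
  rw [logIncrement_eq hθ h, Complex.exp_sub, h, h]

lemma logIncrement_of_mem_slitPlane {p : ℝ → ℂ} (hp : Continuous p) {z u : ℂ} (hu : u ≠ 0)
    (h : ∀ x, (p x - z) * u ∈ Complex.slitPlane) :
    logIncrement p z = Complex.log ((p 1 - z) * u) - Complex.log ((p 0 - z) * u) := by
  rw [logIncrement_eq (θ := fun x => Complex.log ((p x - z) * u) - Complex.log u)]
  · ring
  · exact (Continuous.clog (by fun_prop) h).sub continuous_const
  · intro x
    rw [Complex.exp_sub, Complex.exp_log (Complex.slitPlane_ne_zero (h x)), Complex.exp_log hu]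
    field_simp

lemma continuousAt_logIncrement {p : ℝ → ℂ} (hp : Continuous p)
    (hK : IsCompact (Set.range p)) {z₀ : ℂ} (hz₀ : z₀ ∉ Set.range p) :
    ContinuousAt (logIncrement p) z₀ := by
  have hz : ∀ x, p x - z₀ ≠ 0 := fun x h => hz₀ ⟨x, sub_eq_zero.1 h⟩
  obtain ⟨ε, hε, hball⟩ := Metric.isOpen_iff.1 hK.isClosed.isOpen_compl z₀ hz₀
  have hfar : ∀ x, ε ≤ ‖p x - z₀‖ := fun x => by
    by_contra! hlt
    exact hball (by simpa [dist_eq_norm] using hlt) ⟨x, rfl⟩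
  have hslit : ∀ w ∈ Metric.ball z₀ ε, ∀ x, (p x - w) / (p x - z₀) ∈ Complex.slitPlane := by
    intro w hw x
    have h1 : (p x - w) / (p x - z₀) = 1 + (z₀ - w) / (p x - z₀) := by
      field_simp [hz x]; ring
    rw [h1]
    apply Complex.mem_slitPlane_of_norm_lt_one
    rw [norm_div, div_lt_one (norm_pos_iff.2 (hz x))]
    rw [Metric.mem_ball, dist_comm, dist_eq_norm] at hw
    exact hw.trans_le (hfar x)
  obtain ⟨θ, hθ, h⟩ := exists_continuous_log hp (z := z₀) (fun x => sub_ne_zero.1 (hz x))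
  have heq : ∀ w ∈ Metric.ball z₀ ε, logIncrement p w = logIncrement p z₀ +
      (Complex.log ((p 1 - w) / (p 1 - z₀)) - Complex.log ((p 0 - w) / (p 0 - z₀))) := by
    intro w hw
    rw [logIncrement_eq hθ h, logIncrement_eq
      (θ := fun x => θ x + Complex.log ((p x - w) / (p x - z₀)))]
    · ring
    · exact hθ.add (Continuous.clog 
        ((hp.sub continuous_const).div (hp.sub continuous_const) hz) (hslit w hw))
    · intro x
      rw [Complex.exp_add, h, Complex.exp_log (Complex.slitPlane_ne_zero (hslit w hw x))]
      field_simp [hz x]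
  have hc : ContinuousAt (fun w => logIncrement p z₀ +
      (Complex.log ((p 1 - w) / (p 1 - z₀)) - Complex.log ((p 0 - w) / (p 0 - z₀)))) z₀ := by
    have hm := hslit z₀ (Metric.mem_ball_self hε)
    have hd : ∀ x, ContinuousAt (fun w => (p x - w) / (p x - z₀)) z₀ := fun x =>
      (continuousAt_const.sub continuousAt_id).div_const _
    exact continuousAt_const.add ((hd 1).clog (hm 1) |>.sub ((hd 0).clog (hm 0)))
  exact hc.congr (Filter.eventually_of_mem (Metric.ball_mem_nhds z₀ hε)
    fun w hw => (heq w hw).symm)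

lemma log_sub_log_neg {w : ℂ} (hw : 0 < w.im) :
    Complex.log (-w) - Complex.log w = -(Real.pi * Complex.I) := by
  rw [Complex.log, Complex.log, Complex.arg_neg_eq_arg_sub_pi_of_im_pos hw, norm_neg]
  push_cast
  ring

/-- The increment of the logarithm of `p - z`, corrected by principal logarithms at the endpoints,
which turns it into a locally constant function of `z` off `p`, as long as `z` also avoids the
horizontal rays going left from `p 0` and right from `p 1`. -/
noncomputable def sideIndex (p : ℝ → ℂ) (z : ℂ) : ℂ :=
  logIncrement p z + Complex.log (z - p 0) - Complex.log (p 1 - z)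

lemma sideIndex_eq_of_isPreconnected {p : ℝ → ℂ} (hp : Continuous p)
    (hK : IsCompact (Set.range p)) {S : Set ℂ} (hS : IsPreconnected S)
    (hSp : ∀ z ∈ S, z ∉ Set.range p) (hS0 : ∀ z ∈ S, z - p 0 ∈ Complex.slitPlane)
    (hS1 : ∀ z ∈ S, p 1 - z ∈ Complex.slitPlane) {z w : ℂ} (hz : z ∈ S) (hw : w ∈ S) :
    sideIndex p z = sideIndex p w := by
  refine eq_of_exp_eq_of_isPreconnected hS (f := sideIndex p) (c := -1) ?_ ?_ hz hw
  · intro x hx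
    apply ContinuousAt.continuousWithinAt
    exact ((continuousAt_logIncrement hp hK (hSp x hx)).add
      ((continuousAt_id.sub continuousAt_const).clog (hS0 x hx))).sub
      ((continuousAt_const.sub continuousAt_id).clog (hS1 x hx))
  · intro x hx
    have h0 := Complex.slitPlane_ne_zero (hS0 x hx)
    have h1 := Complex.slitPlane_ne_zero (hS1 x hx)
    have h0' : p 0 - x ≠ 0 := by rw [← neg_sub]; exact neg_ne_zero.2 h0
    rw [sideIndex, Complex.exp_sub, Complex.exp_add, exp_logIncrement hp
      (fun t ht => hSp x hx ⟨t, ht⟩), Complex.exp_log h0, Complex.exp_log h1]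
    field_simp
    ring

lemma sideIndex_of_im_lt {p : ℝ → ℂ} (hp : Continuous p) {z : ℂ} (h : ∀ x, z.im < (p x).im) :
    sideIndex p z = -(Real.pi * Complex.I) := by
  rw [sideIndex, logIncrement_of_mem_slitPlane hp one_ne_zero
    (fun x => Complex.mem_slitPlane_iff.2 (Or.inr (by simpa using (sub_pos.2 (h x)).ne')))]
  have := log_sub_log_neg (w := p 0 - z) (by simpa using h 0)
  rw [neg_sub] at this
  simp only [mul_one]
  linear_combination this

lemma sideIndex_of_lt_im {p : ℝ → ℂ} (hp : Continuous p) {z : ℂ} (h : ∀ x, (p x).im < z.im) :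
    sideIndex p z = Real.pi * Complex.I := by
  rw [sideIndex, logIncrement_of_mem_slitPlane hp one_ne_zero
    (fun x => Complex.mem_slitPlane_iff.2 (Or.inr (by simpa using (sub_neg.2 (h x)).ne)))]
  have := log_sub_log_neg (w := z - p 0) (by simpa using h 0)
  rw [neg_sub] at this
  simp only [mul_one]
  linear_combination -this

lemma isPreconnected_vertical (c : ℝ) {s : Set ℝ} (hs : s.OrdConnected) :
    IsPreconnected {z : ℂ | z.re = c ∧ z.im ∈ s} := by
  have : {z : ℂ | z.re = c ∧ z.im ∈ s} = (fun y : ℝ => (⟨c, y⟩ : ℂ)) '' s := by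
    ext z
    constructor
    · rintro ⟨h1, h2⟩
      exact ⟨z.im, h2, by rw [← h1]⟩
    · rintro ⟨y, hy, rfl⟩
      exact ⟨rfl, hy⟩
  rw [this]
  refine hs.isPreconnected.image _ (Continuous.continuousOn ?_)
  have : (fun y : ℝ => (⟨c, y⟩ : ℂ)) = fun y : ℝ => (c : ℂ) + y * Complex.I := by
    ext y; apply Complex.ext <;> simp
  rw [this]; fun_prop

/-- Two arcs joining the same endpoints `a` and `b` separate the point `z` from infinity
as soon as their logarithmic increments around `z` differ. -/
lemma isBounded_component_of_logIncrement_ne {p q : ℝ → ℂ} (hp : Continuous p)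
    (hq : Continuous q) (hpK : IsCompact (Set.range p)) (hqK : IsCompact (Set.range q))
    (h0 : p 0 = q 0) (h1 : p 1 = q 1) {z : ℂ} (hz : z ∉ Set.range p ∪ Set.range q)
    (hne : logIncrement p z ≠ logIncrement q z) :
    Bornology.IsBounded (connectedComponentIn (Set.range p ∪ Set.range q)ᶜ z) := by
  obtain ⟨M, hM⟩ := (hpK.union hqK).isBounded.exists_norm_le
  by_contra hunb
  obtain ⟨w, hw, hwM⟩ : ∃ w ∈ connectedComponentIn (Set.range p ∪ Set.range q)ᶜ z, M < ‖w‖ := by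
    by_contra! hcon
    exact hunb (isBounded_iff_forall_norm_le.2 ⟨M, hcon⟩)
  have hsub := connectedComponentIn_subset (Set.range p ∪ Set.range q)ᶜ z
  have hw0 : w ≠ 0 := by
    rintro rfl
    have := (norm_nonneg _).trans (hM (p 0) (Or.inl ⟨0, rfl⟩))
    simp at hwM
    linarith
  have hslit : ∀ r ∈ Set.range p ∪ Set.range q, (r - w) * (-w⁻¹) ∈ Complex.slitPlane := by
    intro r hr
    have : (r - w) * (-w⁻¹) = 1 + (-(r / w)) := by field_simp; ring
    rw [this]
    apply Complex.mem_slitPlane_of_norm_lt_one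
    rw [norm_neg, norm_div, div_lt_one (norm_pos_iff.2 hw0)]
    exact (hM r hr).trans_lt hwM
  have hu : -w⁻¹ ≠ 0 := neg_ne_zero.2 (inv_ne_zero hw0)
  have hw_eq : logIncrement p w - logIncrement q w = 0 := by
    rw [logIncrement_of_mem_slitPlane hp hu fun x => hslit _ (Or.inl ⟨x, rfl⟩),
      logIncrement_of_mem_slitPlane hq hu fun x => hslit _ (Or.inr ⟨x, rfl⟩), h0, h1, sub_self]
  have hconst := eq_of_exp_eq_of_isPreconnected
    (isPreconnected_connectedComponentIn (x := z) (F := (Set.range p ∪ Set.range q)ᶜ))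
    (f := fun v => logIncrement p v - logIncrement q v) (c := 1) ?_ ?_
    (mem_connectedComponentIn hz) hw
  · simp only [hw_eq] at hconst
    exact hne (sub_eq_zero.1 hconst)
  · intro v hv
    apply ContinuousAt.continuousWithinAt
    exact (continuousAt_logIncrement hp hpK fun h => hsub hv (Or.inl h)).sub
      (continuousAt_logIncrement hq hqK fun h => hsub hv (Or.inr h))
  · intro v hv
    have hpv : ∀ t, p t ≠ v := fun t h => hsub hv (Or.inl ⟨t, h⟩)
    have hqv : ∀ t, q t ≠ v := fun t h => hsub hv (Or.inr ⟨t, h⟩)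
    rw [Complex.exp_sub, exp_logIncrement hp hpv, exp_logIncrement hq hqv, h0, h1]
    exact div_self (div_ne_zero (sub_ne_zero.2 (hqv 1)) (sub_ne_zero.2 (hqv 0)))

/-- Two arcs with common endpoints on the two sides of a vertical strip containing them, which are
otherwise disjoint, separate the plane; here the arc `p` is the upper one on the line `re = c`. -/
lemma exists_bounded_component_of_upper {p q : ℝ → ℂ} (hp : Continuous p)
    (hq : Continuous q) (hpK : IsCompact (Set.range p)) (hqK : IsCompact (Set.range q))
    (h0 : p 0 = q 0) (h1 : p 1 = q 1)
    (hpr : ∀ z ∈ Set.range p, z ∈ p '' Set.Icc 0 1) (hpi : Set.InjOn p (Set.Icc 0 1))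
    (hdisj : ∀ z ∈ Set.range p, z ∈ Set.range q → z = p 0 ∨ z = p 1)
    (hpre : ∀ x, (p 0).re ≤ (p x).re ∧ (p x).re ≤ (p 1).re)
    {c : ℝ} (hc0 : (p 0).re < c) (hc1 : c < (p 1).re)
    {l : ℂ} (hl : l ∈ Set.range p) (hlc : l.re = c)
    (hmax : ∀ x, (q x).re = c → (q x).im ≤ l.im) :
    ∃ z ∉ Set.range p ∪ Set.range q,
      Bornology.IsBounded (connectedComponentIn (Set.range p ∪ Set.range q)ᶜ z) := by
  have hcne : ∀ z : ℂ, z.re = c → z ≠ p 0 ∧ z ≠ p 1 := fun z hz =>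
    ⟨by rintro rfl; linarith, by rintro rfl; linarith⟩
  have hvert0 : ∀ z : ℂ, z.re = c → z - p 0 ∈ Complex.slitPlane := fun z hz =>
    Complex.mem_slitPlane_iff.2 (Or.inl (by simp; linarith))
  have hvert1 : ∀ z : ℂ, z.re = c → p 1 - z ∈ Complex.slitPlane := fun z hz =>
    Complex.mem_slitPlane_iff.2 (Or.inl (by simp; linarith))
  have hnotq : ∀ z ∈ Set.range p, z ≠ p 0 ∧ z ≠ p 1 → z ∉ Set.range q := fun z hz hne hzq =>
    (hdisj z hz hzq).elim hne.1 hne.2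
  obtain ⟨m, ⟨hmp, hmc⟩, hmin⟩ : ∃ m ∈ Set.range p ∩ {z : ℂ | z.re = c},
      ∀ z ∈ Set.range p ∩ {z : ℂ | z.re = c}, m.im ≤ z.im := by
    have hcl : IsClosed {z : ℂ | z.re = c} := isClosed_eq Complex.continuous_re continuous_const
    exact (hpK.inter_right hcl).exists_isMinOn ⟨l, hl, hlc⟩ Complex.continuous_im.continuousOn
  have hmq := hnotq m hmp (hcne m hmc)
  have hlq := hnotq l hl (hcne l hlc)
  obtain ⟨M, hM⟩ := (hpK.union hqK).isBounded.exists_norm_le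
  have hMim : ∀ z ∈ Set.range p ∪ Set.range q, |z.im| ≤ M := fun z hz =>
    (Complex.abs_im_le_norm z).trans (hM z hz)
  -- along the vertical ray above `l`
  have hup : sideIndex q l = Real.pi * Complex.I := by
    have hS := sideIndex_eq_of_isPreconnected hq hqK
      (isPreconnected_vertical c (Set.ordConnected_Ici (a := l.im))) ?_
      (fun z hz => h0 ▸ hvert0 z hz.1) (fun z hz => h1 ▸ hvert1 z hz.1)
      (z := l) (w := ⟨c, M + 1⟩) ⟨hlc, le_refl l.im⟩
      ⟨rfl, by have := (abs_le.1 (hMim l (Or.inl hl))).2; simp; linarith⟩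
    · rw [hS]
      apply sideIndex_of_lt_im hq
      intro x
      have := (abs_le.1 (hMim (q x) (Or.inr ⟨x, rfl⟩))).2
      simp; linarith
    · rintro z ⟨hzc, hzl⟩ ⟨x, rfl⟩
      have hle := hmax x hzc
      have : q x = l := Complex.ext (hzc.trans hlc.symm) (le_antisymm hle hzl)
      exact hlq ⟨x, this⟩
  -- along the piece of `p` between `l` and `m`
  have harc : sideIndex q l = sideIndex q m := by
    obtain ⟨s, hs, rfl⟩ := hpr l hl
    obtain ⟨t, ht, rfl⟩ := hpr m hmp
    have hs0 : s ≠ 0 := by rintro rfl; exact (hcne _ hlc).1 rfl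
    have hs1 : s ≠ 1 := by rintro rfl; exact (hcne _ hlc).2 rfl
    have ht0 : t ≠ 0 := by rintro rfl; exact (hcne _ hmc).1 rfl
    have ht1 : t ≠ 1 := by rintro rfl; exact (hcne _ hmc).2 rfl
    have hin : ∀ x ∈ Set.uIcc s t, p x ≠ p 0 ∧ p x ≠ p 1 := by
      intro x hx
      obtain ⟨hx1, hx2⟩ : min s t ≤ x ∧ x ≤ max s t := hx
      have hx0 : 0 < x := (lt_min (hs.1.lt_of_ne' hs0) (ht.1.lt_of_ne' ht0)).trans_le hx1
      have hx1 : x < 1 := hx2.trans_lt (max_lt (hs.2.lt_of_ne hs1) (ht.2.lt_of_ne ht1))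
      exact ⟨fun h => hx0.ne' (hpi ⟨hx0.le, hx1.le⟩ (by simp) h),
        fun h => hx1.ne (hpi ⟨hx0.le, hx1.le⟩ (by simp) h)⟩
    refine sideIndex_eq_of_isPreconnected hq hqK
      (Set.ordConnected_uIcc.isPreconnected.image p hp.continuousOn) ?_ ?_ ?_
      (Set.mem_image_of_mem p Set.left_mem_uIcc) (Set.mem_image_of_mem p Set.right_mem_uIcc)
    · rintro _ ⟨x, hx, rfl⟩
      exact hnotq _ ⟨x, rfl⟩ (hin x hx)
    · rintro _ ⟨x, hx, rfl⟩
      rw [← h0, Complex.mem_slitPlane_iff]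
      rcases (hpre x).1.lt_or_eq with h | h
      · left; simpa using h
      · right
        intro him
        exact (hin x hx).1 (Complex.ext h.symm (by simpa [sub_eq_zero] using him))
    · rintro _ ⟨x, hx, rfl⟩
      rw [← h1, Complex.mem_slitPlane_iff]
      rcases (hpre x).2.lt_or_eq with h | h
      · left; simpa using h
      · right
        intro him
        exact (hin x hx).2 (Complex.ext h (sub_eq_zero.1 (by simpa using him)).symm)
  -- just below `m`
  obtain ⟨ε, hε, hball⟩ := Metric.isOpen_iff.1 hqK.isClosed.isOpen_compl m hmq
  have hnear : ∀ w : ℂ, w.re = c ∧ w.im ∈ Set.Icc (m.im - ε / 2) m.im → w ∉ Set.range q := by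
    rintro w ⟨hwc, hw1, hw2⟩
    apply hball
    rw [Metric.mem_ball, dist_eq_norm]
    have : w - m = ((w.im - m.im : ℝ) : ℂ) * Complex.I := by
      apply Complex.ext <;> simp [hwc, show m.re = c from hmc]
    rw [this, norm_mul, Complex.norm_I, mul_one, Complex.norm_real, Real.norm_eq_abs, abs_lt]
    constructor <;> linarith
  have hbelow : ∀ w : ℂ, w.re = c ∧ w.im ∈ Set.Iio m.im → w ∉ Set.range p := fun w hw hwp =>
    (hmin w ⟨hwp, hw.1⟩).not_gt hw.2
  set z : ℂ := ⟨c, m.im - ε / 2⟩ with hzdef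
  have hzq : z ∉ Set.range q := hnear z ⟨rfl, le_rfl, by simp [hzdef]; linarith⟩
  have hzp : z ∉ Set.range p := hbelow z ⟨rfl, by simp [hzdef]; linarith⟩
  have hqz : sideIndex q z = Real.pi * Complex.I := by
    rw [← hup, harc]
    exact sideIndex_eq_of_isPreconnected hq hqK (isPreconnected_vertical c Set.ordConnected_Icc)
      hnear (fun z hz => h0 ▸ hvert0 z hz.1) (fun z hz => h1 ▸ hvert1 z hz.1)
      ⟨rfl, le_rfl, by simp [hzdef]; linarith⟩ ⟨hmc, by linarith, le_rfl⟩
  have hpz : sideIndex p z = -(Real.pi * Complex.I) := by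
    have hmM := (abs_le.1 (hMim m (Or.inl hmp))).1
    rw [sideIndex_eq_of_isPreconnected hp hpK (isPreconnected_vertical c Set.ordConnected_Iio)
      hbelow (fun z hz => hvert0 z hz.1) (fun z hz => hvert1 z hz.1)
      (w := ⟨c, -M - 1⟩) ⟨rfl, by simp [hzdef]; linarith⟩ ⟨rfl, by simp; linarith⟩]
    apply sideIndex_of_im_lt hp
    intro x
    have := (abs_le.1 (hMim (p x) (Or.inl ⟨x, rfl⟩))).1
    simp; linarith
  refine ⟨z, by simp only [Set.mem_union, not_or]; exact ⟨hzp, hzq⟩,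
    isBounded_component_of_logIncrement_ne hp hq hpK hqK h0 h1
      (by simp only [Set.mem_union, not_or]; exact ⟨hzp, hzq⟩) fun heq => ?_⟩
  have : (2 * Real.pi * Complex.I : ℂ) = 0 := by
    rw [sideIndex, ← h0, ← h1, ← heq, ← sideIndex, hpz] at hqz
    linear_combination -hqz
  exact Complex.two_pi_I_ne_zero this

lemma exists_bounded_component_of_arcs {p q : ℝ → ℂ} (hp : Continuous p)
    (hq : Continuous q) (hpK : IsCompact (Set.range p)) (hqK : IsCompact (Set.range q))
    (h0 : p 0 = q 0) (h1 : p 1 = q 1)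
    (hpr : ∀ z ∈ Set.range p, z ∈ p '' Set.Icc 0 1) (hpi : Set.InjOn p (Set.Icc 0 1))
    (hqr : ∀ z ∈ Set.range q, z ∈ q '' Set.Icc 0 1) (hqi : Set.InjOn q (Set.Icc 0 1))
    (hdisj : ∀ z ∈ Set.range p, z ∈ Set.range q → z = p 0 ∨ z = p 1)
    (hpre : ∀ x, (p 0).re ≤ (p x).re ∧ (p x).re ≤ (p 1).re)
    (hqre : ∀ x, (q 0).re ≤ (q x).re ∧ (q x).re ≤ (q 1).re)
    (hlt : (p 0).re < (p 1).re) :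
    ∃ z ∉ Set.range p ∪ Set.range q,
      Bornology.IsBounded (connectedComponentIn (Set.range p ∪ Set.range q)ᶜ z) := by
  obtain ⟨c, hc0, hc1⟩ := exists_between hlt
  have hcl : IsClosed {z : ℂ | z.re = c} := isClosed_eq Complex.continuous_re continuous_const
  obtain ⟨t, -, ht⟩ := intermediate_value_Icc zero_le_one
    (Complex.continuous_re.comp hp).continuousOn ⟨hc0.le, hc1.le⟩
  obtain ⟨l, ⟨hlu, hlc⟩, hmax⟩ : ∃ l ∈ (Set.range p ∪ Set.range q) ∩ {z : ℂ | z.re = c},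
      ∀ z ∈ (Set.range p ∪ Set.range q) ∩ {z : ℂ | z.re = c}, z.im ≤ l.im :=
    ((hpK.union hqK).inter_right hcl).exists_isMaxOn ⟨p t, Or.inl ⟨t, rfl⟩, ht⟩
      Complex.continuous_im.continuousOn
  rcases hlu with hlp | hlq
  · exact exists_bounded_component_of_upper hp hq hpK hqK h0 h1 hpr hpi hdisj hpre hc0 hc1 hlp hlc
      fun x hx => hmax _ ⟨Or.inr ⟨x, rfl⟩, hx⟩
  · rw [Set.union_comm]
    exact exists_bounded_component_of_upper hq hp hqK hpK h0.symm h1.symm hqr hqi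
      (fun z hzq hzp => h0 ▸ h1 ▸ hdisj z hzp hzq) hqre (h0 ▸ hc0) (h1 ▸ hc1) hlq hlc
      fun x hx => hmax _ ⟨Or.inl ⟨x, rfl⟩, hx⟩

/-- The arc of `γ` between the parameters `u` and `v`, reparametrized by `[0, 1]` and extended by
constants. -/
noncomputable def subarc {X : Type*} (γ : ℝ → X) (u v : ℝ) (x : ℝ) : X :=
  γ (AffineMap.lineMap u v (Set.projIcc (0 : ℝ) 1 zero_le_one x : ℝ))

section subarc

variable {X : Type*} {γ : ℝ → X} {u v : ℝ}

lemma continuous_subarc [TopologicalSpace X] (hγ : Continuous γ) :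
    Continuous (subarc γ u v) :=
  hγ.comp (AffineMap.lineMap_continuous.comp (continuous_subtype_val.comp continuous_projIcc))

lemma subarc_zero : subarc γ u v 0 = γ u := by simp [subarc]

lemma subarc_one : subarc γ u v 1 = γ v := by simp [subarc]

lemma subarc_image_Icc : subarc γ u v '' Set.Icc 0 1 = γ '' Set.uIcc u v := by
  rw [← segment_eq_uIcc, segment_eq_image_lineMap, Set.image_image]
  refine Set.image_congr fun x hx => ?_
  rw [subarc, Set.projIcc_of_mem _ hx]

lemma range_subarc : Set.range (subarc γ u v) = γ '' Set.uIcc u v := by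
  rw [← subarc_image_Icc]
  refine subset_antisymm ?_ (Set.image_subset_range _ _)
  rintro _ ⟨x, rfl⟩
  exact ⟨Set.projIcc 0 1 zero_le_one x, Subtype.mem _, by simp [subarc]⟩

lemma injOn_subarc (huv : u ≠ v) (hγ : Set.InjOn γ (Set.uIcc u v)) :
    Set.InjOn (subarc γ u v) (Set.Icc 0 1) := by
  intro x hx y hy h
  have hmem : ∀ x ∈ Set.Icc (0 : ℝ) 1, AffineMap.lineMap u v x ∈ Set.uIcc u v := fun x hx => by
    rw [← segment_eq_uIcc, segment_eq_image_lineMap]; exact Set.mem_image_of_mem _ hx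
  rw [subarc, subarc, Set.projIcc_of_mem _ hx, Set.projIcc_of_mem _ hy] at h
  exact AffineMap.lineMap_injective ℝ huv (hγ (hmem x hx) (hmem y hy) h)

end subarc

/-- A loop parametrized injectively by a circle and not contained in a vertical line
separates the plane. -/
lemma exists_bounded_component_of_loop {Γ : AddCircle (2 : ℝ) → ℂ} (hΓ : Continuous Γ)
    (hinj : Function.Injective Γ) (hre : ∃ x y, (Γ x).re ≠ (Γ y).re) :
    ∃ z ∉ Set.range Γ, Bornology.IsBounded (connectedComponentIn (Set.range Γ)ᶜ z) := by
  have : Fact ((0 : ℝ) < 2) := ⟨two_pos⟩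
  obtain ⟨xa, -, hxa⟩ := isCompact_univ.exists_isMinOn Set.univ_nonempty
    (Complex.continuous_re.comp hΓ).continuousOn
  obtain ⟨xb, -, hxb⟩ := isCompact_univ.exists_isMaxOn Set.univ_nonempty
    (Complex.continuous_re.comp hΓ).continuousOn
  have hmin : ∀ x, (Γ xa).re ≤ (Γ x).re := fun x => hxa (Set.mem_univ x)
  have hmax : ∀ x, (Γ x).re ≤ (Γ xb).re := fun x => hxb (Set.mem_univ x)
  have hlt : (Γ xa).re < (Γ xb).re := by
    obtain ⟨x, y, hxy⟩ := hre
    refine ((hmin x).trans (hmax x)).lt_of_ne fun h => hxy ?_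
    linarith [hmin x, hmax x, hmin y, hmax y]
  set γ : ℝ → ℂ := fun x => Γ x with hγdef
  have hγ : Continuous γ := hΓ.comp (AddCircle.continuous_mk' 2)
  obtain ⟨s, hs⟩ := QuotientAddGroup.mk_surjective xa
  obtain ⟨t, ht, htb⟩ : ∃ t ∈ Set.Ico s (s + 2), (t : AddCircle (2 : ℝ)) = xb :=
    ⟨_, (AddCircle.equivIco 2 s xb).2, AddCircle.coe_equivIco⟩
  have hγs : γ s = Γ xa := congrArg Γ hs
  have hγt : γ t = Γ xb := congrArg Γ htb
  have hγs2 : γ (s + 2) = Γ xa := by rw [← hγs]; exact congrArg Γ (AddCircle.coe_add_period 2 s)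
  have hst : s < t := ht.1.lt_of_ne (by rintro rfl; rw [← hγs, ← hγt] at hlt; exact hlt.false)
  have hIco : ∀ x ∈ Set.Ico s (s + 2), ∀ y ∈ Set.Ico s (s + 2), γ x = γ y → x = y :=
    fun x hx y hy h => (AddCircle.coe_eq_coe_iff_of_mem_Ico hx hy).1 (hinj h)
  have hIoc : ∀ x ∈ Set.Ioc s (s + 2), ∀ y ∈ Set.Ioc s (s + 2), γ x = γ y → x = y :=
    fun x hx y hy h => (AddCircle.coe_eq_coe_iff_of_mem_Ioc hx hy).1 (hinj h)
  have ht2 := ht.2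
  have hrange : Set.range Γ =
      Set.range (subarc γ s t) ∪ Set.range (subarc γ (s + 2) t) := by
    rw [range_subarc, range_subarc, Set.uIcc_of_le hst.le, Set.uIcc_of_ge ht2.le,
      ← Set.image_union, Set.Icc_union_Icc_eq_Icc hst.le ht2.le]
    refine subset_antisymm ?_ ?_
    · rintro _ ⟨x, rfl⟩
      exact ⟨_, Set.Ico_subset_Icc_self (AddCircle.equivIco 2 s x).2,
        congrArg Γ AddCircle.coe_equivIco⟩
    · rintro _ ⟨x, -, rfl⟩
      exact ⟨x, rfl⟩
  rw [hrange]
  apply exists_bounded_component_of_arcs (continuous_subarc hγ) (continuous_subarc hγ)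
  · rw [range_subarc]; exact isCompact_uIcc.image hγ
  · rw [range_subarc]; exact isCompact_uIcc.image hγ
  · rw [subarc_zero, subarc_zero, hγs, hγs2]
  · rw [subarc_one, subarc_one]
  · rw [range_subarc, subarc_image_Icc]; exact fun z hz => hz
  · refine injOn_subarc hst.ne ?_
    rw [Set.uIcc_of_le hst.le]
    exact fun x hx y hy h => hIco x ⟨hx.1, hx.2.trans_lt ht2⟩ y ⟨hy.1, hy.2.trans_lt ht2⟩ h
  · rw [range_subarc, subarc_image_Icc]; exact fun z hz => hz
  · refine injOn_subarc ht2.ne' ?_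
    rw [Set.uIcc_of_ge ht2.le]
    exact fun x hx y hy h => hIoc x ⟨hst.trans_le hx.1, hx.2⟩ y ⟨hst.trans_le hy.1, hy.2⟩ h
  · rw [range_subarc, range_subarc, Set.uIcc_of_le hst.le, Set.uIcc_of_ge ht2.le, subarc_zero,
      subarc_one]
    rintro _ ⟨x, hx, rfl⟩ ⟨y, hy, hxy⟩
    rcases hy.2.eq_or_lt with rfl | hy2
    · left; rw [← hxy, hγs2, hγs]
    · right
      have := hIco x ⟨hx.1, hx.2.trans_lt ht2⟩ y ⟨hst.le.trans hy.1, hy2⟩ hxy.symm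
      rw [le_antisymm hx.2 (this ▸ hy.1)]
  · rw [subarc_zero, subarc_one, hγs, hγt]
    exact fun x => ⟨hmin _, hmax _⟩
  · rw [subarc_zero, subarc_one, hγs2, hγt]
    exact fun x => ⟨hmin _, hmax _⟩
  · rw [subarc_zero, subarc_one, hγs, hγt]
    exact hlt

/-- Two simple arcs with common endpoints which are otherwise disjoint separate the plane. -/
lemma exists_bounded_component_complex {α β : ℝ → ℂ} (hα : Continuous α) (hβ : Continuous β)
    (hαi : Set.InjOn α (Set.Icc 0 1)) (hβi : Set.InjOn β (Set.Icc 0 1))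
    (h0 : α 0 = β 0) (h1 : α 1 = β 1)
    (hdisj : ∀ s ∈ Set.Icc (0 : ℝ) 1, ∀ t ∈ Set.Icc (0 : ℝ) 1, α s = β t →
      (s = 0 ∧ t = 0) ∨ (s = 1 ∧ t = 1)) :
    ∃ z ∉ α '' Set.Icc 0 1 ∪ β '' Set.Icc 0 1,
      Bornology.IsBounded (connectedComponentIn (α '' Set.Icc 0 1 ∪ β '' Set.Icc 0 1)ᶜ z) := by
  have : Fact ((0 : ℝ) < 2) := ⟨two_pos⟩
  set f : ℝ → ℂ := fun t => if t ≤ 1 then α t else β (2 - t) with hf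
  have hfc : Continuous f := by
    refine Continuous.if_le hα (by fun_prop) continuous_id continuous_const ?_
    rintro x rfl
    rw [h1]; norm_num
  have hf02 : f 0 = f 2 := by simp [hf, h0]
  set Γ : AddCircle (2 : ℝ) → ℂ := AddCircle.liftIco 2 0 f with hΓdef
  have hΓ : Continuous Γ := AddCircle.liftIco_zero_continuous hf02 hfc.continuousOn
  have hrep : ∀ x : AddCircle (2 : ℝ), ∃ t ∈ Set.Ico (0 : ℝ) 2, (t : AddCircle (2 : ℝ)) = x ∧
      Γ x = f t := by
    intro x
    have ht : (AddCircle.equivIco 2 0 x : ℝ) ∈ Set.Ico (0 : ℝ) 2 := by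
      simpa using (AddCircle.equivIco 2 0 x).2
    refine ⟨_, ht, AddCircle.coe_equivIco, ?_⟩
    conv_lhs => rw [← AddCircle.coe_equivIco (p := (2 : ℝ)) (a := 0) (y := x)]
    exact AddCircle.liftIco_zero_coe_apply ht
  have hfi : Set.InjOn f (Set.Ico 0 2) := by
    intro x hx y hy hxy
    have hx0 := hx.1
    have hx2 := hx.2
    have hy0 := hy.1
    have hy2 := hy.2
    simp only [hf] at hxy
    split_ifs at hxy with h1x h1y h1y
    · exact hαi ⟨hx0, h1x⟩ ⟨hy0, h1y⟩ hxy
    · rcases hdisj x ⟨hx0, h1x⟩ (2 - y) ⟨by linarith, by linarith⟩ hxy with h | h <;> linarith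
    · rcases hdisj y ⟨hy0, h1y⟩ (2 - x) ⟨by linarith, by linarith⟩ hxy.symm with h | h <;> linarith
    · have := hβi (x₁ := 2 - x) (x₂ := 2 - y) ⟨by linarith, by linarith⟩
        ⟨by linarith, by linarith⟩ hxy
      linarith
  have hinj : Function.Injective Γ := by
    intro x y hxy
    obtain ⟨s, hs, rfl, hsx⟩ := hrep x
    obtain ⟨t, ht, rfl, hty⟩ := hrep y
    rw [hfi hs ht (hsx.symm.trans (hxy.trans hty))]
  have hrange : Set.range Γ = α '' Set.Icc 0 1 ∪ β '' Set.Icc 0 1 := by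
    refine subset_antisymm ?_ ?_
    · rintro _ ⟨x, rfl⟩
      obtain ⟨t, ht, -, hx⟩ := hrep x
      rw [hx]
      simp only [hf]
      split_ifs with h
      · exact Or.inl ⟨t, ⟨ht.1, h⟩, rfl⟩
      · exact Or.inr ⟨2 - t, ⟨by linarith [ht.2], by linarith⟩, rfl⟩
    · have hmem : ∀ t ∈ Set.Ico (0 : ℝ) 2, f t ∈ Set.range Γ := fun t ht =>
        ⟨t, AddCircle.liftIco_zero_coe_apply ht⟩
      rintro _ (⟨t, ht, rfl⟩ | ⟨t, ht, rfl⟩)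
      · have := hmem t ⟨ht.1, by linarith [ht.2]⟩
        rwa [show f t = α t by simp [hf, ht.2]] at this
      · rcases ht.1.eq_or_lt with rfl | ht0
        · have := hmem 0 ⟨le_rfl, two_pos⟩
          rwa [show f 0 = β 0 by simp [hf, h0]] at this
        · have := hmem (2 - t) ⟨by linarith [ht.2], by linarith⟩
          rcases ht.2.eq_or_lt with rfl | ht1
          · rwa [show f (2 - 1) = β 1 by norm_num [hf, h1]] at this
          · rwa [show f (2 - t) = β t by
              simp only [hf]; rw [if_neg (by linarith)]; congr 1; ring] at this
  rw [← hrange]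
  refine exists_bounded_component_of_loop hΓ hinj ?_
  by_contra! hconst
  have hαΓ : ∀ s ∈ Set.Icc (0 : ℝ) 1, α s ∈ Set.range Γ := fun s hs =>
    hrange ▸ Or.inl ⟨s, hs, rfl⟩
  have hβΓ : ∀ s ∈ Set.Icc (0 : ℝ) 1, β s ∈ Set.range Γ := fun s hs =>
    hrange ▸ Or.inr ⟨s, hs, rfl⟩
  have hre : ∀ z ∈ Set.range Γ, ∀ w ∈ Set.range Γ, z.re = w.re := by
    rintro _ ⟨x, rfl⟩ _ ⟨y, rfl⟩; exact hconst x y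
  have hi0 : (0 : ℝ) ∈ Set.Icc (0 : ℝ) 1 := by simp
  have hi1 : (1 : ℝ) ∈ Set.Icc (0 : ℝ) 1 := by simp
  have him : (α 0).im ≠ (α 1).im := fun h =>
    zero_ne_one (hαi hi0 hi1 (Complex.ext (hre _ (hαΓ 0 hi0) _ (hαΓ 1 hi1)) h))
  have hmid : ((α 0).im + (α 1).im) / 2 ∈ Set.uIcc (α 0).im (α 1).im := by
    rw [Set.mem_uIcc]
    rcases le_total (α 0).im (α 1).im with h | h
    · left; constructor <;> linarith
    · right; constructor <;> linarith
  obtain ⟨s, hs, hsv⟩ := intermediate_value_uIcc (a := (0 : ℝ)) (b := 1)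
    (f := fun x => (α x).im) (Complex.continuous_im.comp hα).continuousOn hmid
  obtain ⟨t, ht, htv⟩ := intermediate_value_uIcc (a := (0 : ℝ)) (b := 1)
    (f := fun x => (β x).im) (Complex.continuous_im.comp hβ).continuousOn
    (by rw [← h0, ← h1]; exact hmid)
  rw [Set.uIcc_of_le zero_le_one] at hs ht
  rcases hdisj s hs t ht (Complex.ext (hre _ (hαΓ s hs) _ (hβΓ t ht)) (hsv.trans htv.symm))
    with ⟨rfl, -⟩ | ⟨rfl, -⟩
  · apply him; simp only at hsv; linarith
  · apply him; simp only at hsv; linarith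

lemma exists_bounded_component {α β : ℝ → EuclideanSpace ℝ (Fin 2)}
    (hα : Continuous α) (hβ : Continuous β)
    (hαi : Set.InjOn α (Set.Icc 0 1)) (hβi : Set.InjOn β (Set.Icc 0 1))
    (h0 : α 0 = β 0) (h1 : α 1 = β 1)
    (hdisj : ∀ s ∈ Set.Icc (0 : ℝ) 1, ∀ t ∈ Set.Icc (0 : ℝ) 1, α s = β t →
      (s = 0 ∧ t = 0) ∨ (s = 1 ∧ t = 1)) :
    ∃ z ∉ α '' Set.Icc 0 1 ∪ β '' Set.Icc 0 1,
      Bornology.IsBounded (connectedComponentIn (α '' Set.Icc 0 1 ∪ β '' Set.Icc 0 1)ᶜ z) := by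
  let e := Complex.orthonormalBasisOneI.repr
  obtain ⟨z, hz, hb⟩ := exists_bounded_component_complex
    (e.symm.continuous.comp hα) (e.symm.continuous.comp hβ)
    (e.symm.injective.comp_injOn hαi) (e.symm.injective.comp_injOn hβi)
    (congrArg e.symm h0) (congrArg e.symm h1)
    (fun s hs t ht h => hdisj s hs t ht (e.symm.injective h))
  have himg : e '' (e.symm ∘ α '' Set.Icc 0 1 ∪ e.symm ∘ β '' Set.Icc 0 1) =
      α '' Set.Icc 0 1 ∪ β '' Set.Icc 0 1 := by
    rw [Set.image_union, ← Set.image_comp, ← Set.image_comp, ← Function.comp_assoc,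
      ← Function.comp_assoc]
    simp
  have hcompl : e '' (e.symm ∘ α '' Set.Icc 0 1 ∪ e.symm ∘ β '' Set.Icc 0 1)ᶜ =
      (α '' Set.Icc 0 1 ∪ β '' Set.Icc 0 1)ᶜ := by
    rw [Set.image_compl_eq e.bijective, himg]
  refine ⟨e z, ?_, ?_⟩
  · rw [← himg]
    rintro ⟨w, hw, hwz⟩
    exact hz (e.injective hwz ▸ hw)
  · rw [← hcompl]
    have hz' : z ∈ (e.symm ∘ α '' Set.Icc 0 1 ∪ e.symm ∘ β '' Set.Icc 0 1)ᶜ := hz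
    have := e.toHomeomorph.image_connectedComponentIn hz'
    simp only [LinearIsometryEquiv.coe_toHomeomorph] at this
    rw [← this]
    exact e.lipschitz.isBounded_image hb

/-- A positively homogeneous subadditive function, bounded below by a multiple of the norm, for
which equality in the triangle inequality only holds for vectors in the same direction. -/
structure IsStrictGauge {E : Type*} [NormedAddCommGroup E] [NormedSpace ℝ E] (N : E → ℝ) :
    Prop where
  continuous : Continuous N
  add_le : ∀ x y, N (x + y) ≤ N x + N y
  smul : ∀ c : ℝ, 0 ≤ c → ∀ x, N (c • x) = c * N x
  exists_le : ∃ ε > 0, ∀ x, ε * ‖x‖ ≤ N x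
  sameRay : ∀ x y, N x + N y ≤ N (x + y) → SameRay ℝ x y

/-- `γ` is a curve in `R` of `N`-speed at most `1`, starting from `P` at time `0` and
reaching `Q` at time `T`. -/
structure IsAdmissible {E : Type*} [NormedAddCommGroup E] [NormedSpace ℝ E] (N : E → ℝ)
    (R : Set E) (P Q : E) (T : ℝ) (γ : ℝ → E) : Prop where
  mem : ∀ t, γ t ∈ R
  le : ∀ s t, s ≤ t → N (γ t - γ s) ≤ t - s
  zero : γ 0 = P
  final : ∀ t, N (Q - γ t) ≤ max (T - t) 0

/-- `γ` is an admissible curve reaching `Q` in the smallest possible time `T`. -/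
structure IsMinimizing {E : Type*} [NormedAddCommGroup E] [NormedSpace ℝ E] (N : E → ℝ)
    (R : Set E) (P Q : E) (T : ℝ) (γ : ℝ → E) : Prop extends IsAdmissible N R P Q T γ where
  min : ∀ T' γ', IsAdmissible N R P Q T' γ' → T ≤ T'

section gauge

variable {E : Type*} [NormedAddCommGroup E] [NormedSpace ℝ E] {N : E → ℝ} {R : Set E} {P Q : E}
  {T : ℝ} {γ : ℝ → E}

namespace IsStrictGauge

lemma zero (hN : IsStrictGauge N) : N 0 = 0 := by
  simpa using hN.smul 0 le_rfl 0

lemma eq_zero_of_le (hN : IsStrictGauge N) {x : E} (hx : N x ≤ 0) : x = 0 := by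
  obtain ⟨ε, hε, h⟩ := hN.exists_le
  have := (h x).trans hx
  exact norm_le_zero_iff.1 (nonpos_of_mul_nonpos_right this hε)

lemma nonneg (hN : IsStrictGauge N) (x : E) : 0 ≤ N x := by
  obtain ⟨ε, hε, h⟩ := hN.exists_le
  exact le_trans (by positivity) (h x)

lemma sub_le (hN : IsStrictGauge N) (x y z : E) : N (z - x) ≤ N (z - y) + N (y - x) := by
  simpa using hN.add_le (z - y) (y - x)

lemma le_glue (hN : IsStrictGauge N) {f g : ℝ → E} {a : ℝ} (hfg : f a = g a)
    (hf : ∀ s t, s ≤ t → t ≤ a → N (f t - f s) ≤ t - s)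
    (hg : ∀ s t, a ≤ s → s ≤ t → N (g t - g s) ≤ t - s) (s t : ℝ) (hst : s ≤ t) :
    N ((if t ≤ a then f t else g t) - (if s ≤ a then f s else g s)) ≤ t - s := by
  split_ifs with ht hs hs
  · exact hf s t hst ht
  · linarith
  · have h1 := hN.sub_le (f s) (f a) (g t)
    have h2 := hf s a hs le_rfl
    have h3 := hg a t le_rfl (not_le.1 ht).le
    rw [hfg] at h1 h2
    linarith
  · exact hg s t (not_le.1 hs).le hst

end IsStrictGauge

namespace IsAdmissible

lemma apply_of_le (hN : IsStrictGauge N) (h : IsAdmissible N R P Q T γ) {t : ℝ} (ht : T ≤ t) :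
    γ t = Q := by
  have := h.final t
  rw [max_eq_right (by linarith)] at this
  exact (sub_eq_zero.1 (hN.eq_zero_of_le this)).symm

lemma pos (hN : IsStrictGauge N) (h : IsAdmissible N R P Q T γ) (hPQ : P ≠ Q) : 0 < T := by
  by_contra! hT
  exact hPQ (h.zero.symm.trans (h.apply_of_le hN hT))

lemma continuous (hN : IsStrictGauge N) (h : IsAdmissible N R P Q T γ) : Continuous γ := by
  obtain ⟨ε, hε, hle⟩ := hN.exists_le
  have key : ∀ s t, s ≤ t → dist (γ s) (γ t) ≤ ε⁻¹ * dist s t := fun s t hst => by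
    rw [dist_comm, dist_eq_norm, dist_comm, Real.dist_eq, abs_of_nonneg (sub_nonneg.2 hst),
      ← div_eq_inv_mul, le_div_iff₀' hε]
    exact (hle _).trans (h.le s t hst)
  refine (LipschitzWith.of_dist_le_mul (K := ⟨ε⁻¹, by positivity⟩) fun s t => ?_).continuous
  rcases le_total s t with hst | hst
  · exact key s t hst
  · rw [dist_comm, dist_comm s]; exact key t s hst

lemma shortcut (hN : IsStrictGauge N) (h : IsAdmissible N R P Q T γ) {u v κ : ℝ} (hu : 0 ≤ u)
    (hvT : v ≤ T) (hseg : segment ℝ (γ u) (γ v) ⊆ R) (hκ : 0 < κ)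
    (hle : N (γ v - γ u) ≤ κ) : ∃ γ', IsAdmissible N R P Q (T - (v - u - κ)) γ' := by
  set g : ℝ → E := fun t => if t ≤ u + κ then AffineMap.lineMap (γ u) (γ v) ((t - u) / κ)
    else γ (t + (v - u - κ)) with hg
  have hgle : ∀ s t, s ≤ t → N (g t - g s) ≤ t - s := by
    refine hN.le_glue ?_ (fun s t hst _ => ?_) (fun s t _ hst => ?_)
    · rw [add_sub_cancel_left, div_self hκ.ne', AffineMap.lineMap_apply_one]
      congr 1; ring
    · rw [AffineMap.lineMap_apply, AffineMap.lineMap_apply, vadd_eq_add, vadd_eq_add,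
        add_sub_add_right_eq_sub, ← sub_smul, vsub_eq_sub, ← sub_div, sub_sub_sub_cancel_right,
        hN.smul _ (div_nonneg (sub_nonneg.2 hst) hκ.le)]
      calc (t - s) / κ * N (γ v - γ u) ≤ (t - s) / κ * κ :=
            mul_le_mul_of_nonneg_left hle (div_nonneg (sub_nonneg.2 hst) hκ.le)
        _ = t - s := div_mul_cancel₀ _ hκ.ne'
    · refine (h.le _ _ (by linarith)).trans_eq (by ring)
  have hgu : γ u = g u := by simp [hg, hκ.le]
  have hgκ : g (u + κ) = γ v := by simp [hg, hκ.ne']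
  set f : ℝ → E := fun t => if t ≤ u then γ t else g t with hf
  have hfle : ∀ s t, s ≤ t → N (f t - f s) ≤ t - s :=
    hN.le_glue hgu (fun s t hst _ => h.le s t hst) (fun s t _ hst => hgle s t hst)
  refine ⟨f, fun t => ?_, hfle, by simp [hf, hu, h.zero], fun t => ?_⟩
  · simp only [hf, hg]
    split_ifs with h1 h2
    · exact h.mem t
    · refine hseg ?_
      rw [segment_eq_image_lineMap]
      refine Set.mem_image_of_mem _ ⟨div_nonneg (by linarith) hκ.le, ?_⟩
      rw [div_le_one hκ]; linarith
    · exact h.mem _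
  · rcases le_or_gt t (u + κ) with ht | ht
    · have h1 := hN.sub_le (f t) (f (u + κ)) Q
      have h2 := hfle t (u + κ) ht
      have h3 : f (u + κ) = γ v := by simp [hf, hκ, hgκ]
      have h4 := h.final v
      rw [max_eq_left (by linarith)] at h4
      rw [h3] at h1 h2
      refine le_max_of_le_left ?_
      linarith
    · have h1 : f t = γ (t + (v - u - κ)) := by
        simp only [hf, hg]
        rw [if_neg (by linarith), if_neg (by linarith)]
      rw [h1]
      convert h.final (t + (v - u - κ)) using 2
      ring

/-- If some admissible curve exists in a compact set, then a minimizing one exists. -/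
lemma exists_isMinimizing (hN : IsStrictGauge N) (hR : IsCompact R) (hPQ : P ≠ Q)
    (h : IsAdmissible N R P Q T γ) : ∃ T' γ', IsMinimizing N R P Q T' γ' := by
  set S : Set (ℝ × (ℝ → E)) := {x | IsAdmissible N R P Q x.1 x.2} ∩
    Set.Icc 0 T ×ˢ Set.univ.pi fun _ => R with hS
  have hScompact : IsCompact S := by
    refine IsCompact.inter_left (isCompact_Icc.prod (isCompact_univ_pi fun _ => hR)) ?_
    have : {x : ℝ × (ℝ → E) | IsAdmissible N R P Q x.1 x.2} =
        {x | ∀ t, x.2 t ∈ R} ∩ {x | ∀ s t, s ≤ t → N (x.2 t - x.2 s) ≤ t - s} ∩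
          {x | x.2 0 = P} ∩ {x | ∀ t, N (Q - x.2 t) ≤ max (x.1 - t) 0} := by
      ext x
      exact ⟨fun h => ⟨⟨⟨h.1, h.2⟩, h.3⟩, h.4⟩, fun h => ⟨h.1.1.1, h.1.1.2, h.1.2, h.2⟩⟩
    rw [this]
    have hNc := hN.continuous
    have hev : ∀ t : ℝ, Continuous fun x : ℝ × (ℝ → E) => x.2 t := fun t =>
      (continuous_apply t).comp continuous_snd
    refine ((IsClosed.inter ?_ ?_).inter ?_).inter ?_
    · simp only [Set.ofPred_forall]
      exact isClosed_iInter fun t => hR.isClosed.preimage (hev t)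
    · simp only [Set.ofPred_forall]
      exact isClosed_iInter fun s => isClosed_iInter fun t => isClosed_iInter fun _ =>
        isClosed_le (hNc.comp ((hev t).sub (hev s))) continuous_const
    · exact isClosed_eq (hev 0) continuous_const
    · simp only [Set.ofPred_forall]
      exact isClosed_iInter fun t => isClosed_le (hNc.comp (continuous_const.sub (hev t)))
        ((continuous_fst.sub continuous_const).max continuous_const)
  have hne : S.Nonempty :=
    ⟨(T, γ), h, ⟨(h.pos hN hPQ).le, le_rfl⟩, fun t _ => h.mem t⟩
  obtain ⟨x, hx, hmin⟩ := hScompact.exists_isMinOn hne continuous_fst.continuousOn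
  refine ⟨x.1, x.2, hx.1, fun T' γ' h' => ?_⟩
  rcases le_total T' T with hT | hT
  · exact hmin (show (T', γ') ∈ S from
      ⟨h', ⟨(h'.pos hN hPQ).le, hT⟩, fun t _ => h'.mem t⟩)
  · exact hx.2.1.2.trans hT

end IsAdmissible

namespace IsMinimizing

lemma le_of_segment_subset (hN : IsStrictGauge N) (h : IsMinimizing N R P Q T γ) {u v : ℝ}
    (hu : 0 ≤ u) (huv : u < v) (hvT : v ≤ T) (hseg : segment ℝ (γ u) (γ v) ⊆ R) :
    v - u ≤ N (γ v - γ u) := by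
  by_contra! hlt
  have hκ : max (N (γ v - γ u)) ((v - u) / 2) < v - u := max_lt hlt (by linarith)
  obtain ⟨γ', h'⟩ := h.shortcut hN hu hvT hseg (lt_max_of_lt_right (by linarith))
    (le_max_left _ ((v - u) / 2))
  linarith [h.min _ _ h']

lemma injOn (hN : IsStrictGauge N) (h : IsMinimizing N R P Q T γ) :
    Set.InjOn γ (Set.Icc 0 T) := by
  have key : ∀ u v, 0 ≤ u → u < v → v ≤ T → γ u ≠ γ v := fun u v hu huv hvT he => by
    have := h.le_of_segment_subset hN hu huv hvT (by
      rw [he, segment_same]; exact Set.singleton_subset_iff.2 (h.mem v))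
    rw [he, sub_self, hN.zero] at this
    linarith
  intro u hu v hv he
  rcases lt_trichotomy u v with huv | huv | huv
  · exact (key u v hu.1 huv hv.2 he).elim
  · exact huv
  · exact (key v u hv.1 huv hu.2 he.symm).elim

/-- A minimizing curve follows the segments contained in the region. -/
lemma mem_openSegment (hN : IsStrictGauge N) (h : IsMinimizing N R P Q T γ) {u v m : ℝ}
    (hu : 0 ≤ u) (hum : u < m) (hmv : m < v) (hvT : v ≤ T)
    (hseg : segment ℝ (γ u) (γ v) ⊆ R) : γ m ∈ openSegment ℝ (γ u) (γ v) := by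
  have h1 := h.le_of_segment_subset hN hu (hum.trans hmv) hvT hseg
  have h2 := h.le u m hum.le
  have h3 := h.le m v hmv.le
  have hray := hN.sameRay (γ m - γ u) (γ v - γ m) (by
    rw [show γ m - γ u + (γ v - γ m) = γ v - γ u by abel]; linarith)
  refine mem_openSegment_of_ne_left_right (fun he => ?_) (fun he => ?_)
    (mem_segment_iff_sameRay.2 hray)
  · exact hum.ne (h.injOn hN ⟨hu, by linarith⟩ ⟨by linarith, by linarith⟩ he)
  · exact hmv.ne' (h.injOn hN ⟨by linarith, hvT⟩ ⟨by linarith, by linarith⟩ he)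

/-- A segment contained in the region, joining two points of a minimizing curve, contains other
points of that curve. -/
lemma exists_mem_openSegment (hN : IsStrictGauge N) (h : IsMinimizing N R P Q T γ) {u v : ℝ}
    (hu : u ∈ Set.Icc 0 T) (hv : v ∈ Set.Icc 0 T) (huv : u ≠ v)
    (hseg : segment ℝ (γ u) (γ v) ⊆ R) :
    ∃ m ∈ Set.uIcc u v, γ m ∈ openSegment ℝ (γ u) (γ v) := by
  have hmem : (u + v) / 2 ∈ Set.uIcc u v := by
    rw [Set.mem_uIcc]
    rcases le_total u v with h | h
    · left; constructor <;> linarith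
    · right; constructor <;> linarith
  refine ⟨(u + v) / 2, hmem, ?_⟩
  rcases huv.lt_or_gt with hlt | hlt
  · exact h.mem_openSegment hN hu.1 (by linarith) (by linarith) hv.2 hseg
  · rw [openSegment_symm]
    rw [segment_symm] at hseg
    exact h.mem_openSegment hN hv.1 (by linarith) (by linarith) hu.2 hseg

end IsMinimizing

end gauge

section hull

lemma exists_inner_eq_zero (v : EuclideanSpace ℝ (Fin 2)) :
    ∃ w : EuclideanSpace ℝ (Fin 2), w ≠ 0 ∧ inner ℝ v w = 0 := by
  by_cases hv : v = 0
  · exact ⟨!₂[1, 0], fun h => by simpa using congrArg (fun x => x 0) h, by simp [hv]⟩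
  · refine ⟨!₂[-v 1, v 0], fun h => hv ?_, ?_⟩
    · have h0 := congrArg (fun x => x 0) h
      have h1 := congrArg (fun x => x 1) h
      ext i
      fin_cases i
      · simpa using h1
      · simpa using h0
    · simp [PiLp.inner_apply, Fin.sum_univ_two]
      ring

variable {E : Type*} [NormedAddCommGroup E] [NormedSpace ℝ E]

lemma closure_connectedComponentIn_subset {S : Set E} (hS : IsClosed S) (z : E) :
    closure (connectedComponentIn Sᶜ z) ⊆ connectedComponentIn Sᶜ z ∪ S := by
  intro x hx
  by_cases hxS : x ∈ S
  · exact Or.inr hxS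
  · left
    obtain ⟨y, hyx, hyz⟩ := mem_closure_iff.1 hx _ (hS.isOpen_compl.connectedComponentIn (x := x))
      (mem_connectedComponentIn hxS)
    rw [connectedComponentIn_eq hyz, ← connectedComponentIn_eq hyx]
    exact mem_connectedComponentIn hxS

/-- A ray issued from a point of a bounded open set leaves it for the first time at a boundary
point. -/
lemma exists_exit_time {U : Set E} (hU : IsOpen U) (hb : Bornology.IsBounded U) {y d : E}
    (hy : y ∈ U) (hd : d ≠ 0) :
    ∃ t : ℝ, 0 < t ∧ y + t • d ∈ closure U \ U ∧ ∀ s, 0 ≤ s → s < t → y + s • d ∈ U := by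
  set C : Set ℝ := {t | 0 ≤ t ∧ y + t • d ∉ U} with hC
  have hcont : Continuous fun t : ℝ => y + t • d := by fun_prop
  have hclosed : IsClosed C :=
    (isClosed_le continuous_const continuous_id).inter (hU.isClosed_compl.preimage hcont)
  have hbdd : BddBelow C := ⟨0, fun t ht => ht.1⟩
  have hne : C.Nonempty := by
    obtain ⟨r, hr⟩ := hb.subset_ball y
    have hr0 : 0 < r := by simpa using (Metric.nonempty_ball.1 ⟨y, hr hy⟩)
    refine ⟨r / ‖d‖, by positivity, fun h => ?_⟩
    have := hr h
    rw [mem_ball_iff_norm, add_sub_cancel_left, norm_smul, Real.norm_of_nonneg (by positivity),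
      div_mul_cancel₀ _ (norm_ne_zero_iff.2 hd)] at this
    exact this.false
  have hmem := hclosed.csInf_mem hne hbdd
  have hlt : ∀ s, 0 ≤ s → s < sInf C → y + s • d ∈ U := fun s h0 hs => by
    by_contra h
    exact (csInf_le hbdd ⟨h0, h⟩).not_gt hs
  have hpos : 0 < sInf C := hmem.1.lt_of_ne fun h => hmem.2 (by rw [← h]; simpa using hy)
  refine ⟨sInf C, hpos, ⟨?_, hmem.2⟩, hlt⟩
  have : sInf C ∈ closure (Set.Ico 0 (sInf C)) := by
    rw [closure_Ico hpos.ne]; exact ⟨hpos.le, le_rfl⟩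
  exact map_mem_closure (f := fun t : ℝ => y + t • d) hcont this fun s hs => hlt s hs.1 hs.2

/-- Near a farthest point of a bounded planar domain there is a chord of the domain. -/
lemma exists_chord {G : Set (EuclideanSpace ℝ (Fin 2))} (hG : IsOpen G)
    (hb : Bornology.IsBounded G) {c e : EuclideanSpace ℝ (Fin 2)} (he : e ∈ closure G)
    (hmax : ∀ x ∈ closure G, dist x c ≤ dist e c) {δ : ℝ} (hδ : 0 < δ) :
    ∃ a b, a ≠ b ∧ a ∈ closure G \ G ∧ b ∈ closure G \ G ∧ dist a e < δ ∧ dist b e < δ ∧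
      openSegment ℝ a b ⊆ G := by
  have hquad : ∀ x ∈ closure G, dist x e ^ 2 ≤ -2 * inner ℝ (x - e) (e - c) := fun x hx => by
    have h1 := hmax x hx
    rw [dist_eq_norm, dist_eq_norm] at h1
    have h2 := norm_add_sq_real (x - e) (e - c)
    rw [sub_add_sub_cancel] at h2
    have h3 := pow_le_pow_left₀ (norm_nonneg _) h1 2
    rw [dist_eq_norm]
    linarith
  obtain ⟨d, hd, hnd⟩ := exists_inner_eq_zero (e - c)
  have hdn : inner ℝ d (e - c) = 0 := by rw [real_inner_comm]; exact hnd
  obtain ⟨y, hyU, hyG⟩ := mem_closure_iff.1 he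
    {x | -2 * inner ℝ (x - e) (e - c) < δ ^ 2}
    (isOpen_lt (by fun_prop) continuous_const) (by simp; positivity)
  have hclose : ∀ t : ℝ, y + t • d ∈ closure G → dist (y + t • d) e < δ := fun t ht => by
    have h1 := hquad _ ht
    rw [add_sub_right_comm, inner_add_left, inner_smul_left, hdn, mul_zero, add_zero] at h1
    exact lt_of_pow_lt_pow_left₀ 2 hδ.le (h1.trans_lt hyU)
  obtain ⟨t₁, ht₁, hm₁, hs₁⟩ := exists_exit_time hG hb hyG hd
  obtain ⟨t₂, ht₂, hm₂, hs₂⟩ := exists_exit_time hG hb hyG (neg_ne_zero.2 hd)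
  have hneg : ∀ t : ℝ, y + t • -d = y + (-t) • d := fun t => by rw [smul_neg, neg_smul]
  simp only [hneg] at hm₂ hs₂
  refine ⟨y + t₁ • d, y + (-t₂) • d, ?_, hm₁, hm₂, hclose _ hm₁.1, hclose _ hm₂.1, ?_⟩
  · intro h
    have := smul_left_injective ℝ hd (add_left_cancel h)
    linarith
  · rintro _ ⟨p, q, hp, hq, hpq, rfl⟩
    have hx : p • (y + t₁ • d) + q • (y + (-t₂) • d) = y + (p * t₁ - q * t₂) • d := by
      obtain rfl : q = 1 - p := by linarith
      module
    rw [hx]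
    rcases le_total 0 (p * t₁ - q * t₂) with h | h
    · exact hs₁ _ h (by nlinarith)
    · have := hs₂ (-(p * t₁ - q * t₂)) (by linarith) (by nlinarith)
      rwa [neg_neg] at this

/-- If two closed planar sets have at most two common points and a bounded component of the
complement of their union is given, then this component has a chord whose endpoints belong to the
same one of these sets. -/
lemma exists_chord_of_bounded_component {S₁ S₂ : Set (EuclideanSpace ℝ (Fin 2))}
    (hS₁ : IsClosed S₁) (hS₂ : IsClosed S₂) {A B z : EuclideanSpace ℝ (Fin 2)}
    (hinter : S₁ ∩ S₂ ⊆ {A, B}) (hz : z ∉ S₁ ∪ S₂)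
    (hb : Bornology.IsBounded (connectedComponentIn (S₁ ∪ S₂)ᶜ z)) :
    ∃ a b, a ≠ b ∧ openSegment ℝ a b ⊆ connectedComponentIn (S₁ ∪ S₂)ᶜ z ∧
      ((a ∈ S₁ ∧ b ∈ S₁) ∨ (a ∈ S₂ ∧ b ∈ S₂)) := by
  set G := connectedComponentIn (S₁ ∪ S₂)ᶜ z with hGdef
  have hS := hS₁.union hS₂
  have hG : IsOpen G := hS.isOpen_compl.connectedComponentIn
  have hzG : z ∈ G := mem_connectedComponentIn hz
  have hfr : ∀ x ∈ closure G \ G, x ∈ S₁ ∪ S₂ := fun x hx =>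
    (closure_connectedComponentIn_subset hS z hx.1).resolve_left hx.2
  obtain ⟨w, hw, hABw⟩ := exists_inner_eq_zero (B - A)
  obtain ⟨g, hgG, hg⟩ : ∃ g ∈ G, inner ℝ (g - A) w ≠ 0 := by
    by_contra! h
    have hc : Continuous fun t : ℝ => z + t • w := by fun_prop
    have h1 : ∀ᶠ t in nhds (0 : ℝ), z + t • w ∈ G :=
      hc.continuousAt.eventually (hG.mem_nhds (by simpa using hzG))
    obtain ⟨t, ht, ht0⟩ := ((h1.filter_mono nhdsWithin_le_nhds).and
      (self_mem_nhdsWithin (s := {(0 : ℝ)}ᶜ))).exists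
    have h2 := h _ ht
    rw [add_sub_right_comm, inner_add_left, h z hzG, inner_smul_left, zero_add] at h2
    rcases mul_eq_zero.1 h2 with h3 | h3
    · exact ht0 (by simpa using h3)
    · exact hw (inner_self_eq_zero.1 h3)
  set k := inner ℝ (g - A) w with hk
  set K := |inner ℝ (g - B) (B - A)| / k ^ 2 with hK
  set c := A - (K * k) • w with hc
  have hk2 : 0 < k ^ 2 := by positivity
  have hKk : K * k ^ 2 = |inner ℝ (g - B) (B - A)| := div_mul_cancel₀ _ hk2.ne'
  have hfar : ∀ X : EuclideanSpace ℝ (Fin 2), X ≠ g → 0 ≤ inner ℝ (g - X) (X - c) →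
      dist X c < dist g c := fun X hX h => by
    rw [dist_eq_norm, dist_eq_norm]
    refine lt_of_pow_lt_pow_left₀ 2 (norm_nonneg _) ?_
    have h2 := norm_add_sq_real (g - X) (X - c)
    rw [sub_add_sub_cancel] at h2
    have : 0 < ‖g - X‖ := norm_pos_iff.2 (sub_ne_zero.2 hX.symm)
    nlinarith
  have hkB : inner ℝ (g - B) w = k := by
    have : g - B = (g - A) - (B - A) := by abel
    rw [this, inner_sub_left, hABw, sub_zero]
  have hA : dist A c < dist g c := by
    refine hfar A ?_ ?_
    · rintro rfl; simp [hk] at hg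
    · rw [hc, sub_sub_cancel, inner_smul_right, ← hk, mul_assoc, ← sq, hKk]
      exact abs_nonneg _
  have hB : dist B c < dist g c := by
    refine hfar B ?_ ?_
    · rintro rfl; rw [sub_self, inner_zero_left] at hkB; exact hg hkB.symm
    · have : B - c = (B - A) + (K * k) • w := by rw [hc]; abel
      rw [this, inner_add_right, inner_smul_right, hkB, mul_assoc, ← sq, hKk]
      linarith [neg_abs_le (inner ℝ (g - B) (B - A))]
  obtain ⟨e, he, hmax'⟩ := hb.isCompact_closure.exists_isMaxOn ⟨g, subset_closure hgG⟩
    (f := fun x => dist x c) (by fun_prop)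
  have hmax : ∀ x ∈ closure G, dist x c ≤ dist e c := fun x hx => hmax' hx
  have hge := hmax g (subset_closure hgG)
  have heG : e ∉ G := fun h => by
    have hec : e - c ≠ 0 := by
      intro h0
      rw [sub_eq_zero] at h0
      rw [h0, dist_self] at hge
      exact (dist_nonneg.trans_lt hA).not_ge hge
    obtain ⟨t, ht, hm, -⟩ := exists_exit_time hG hb h hec
    have h1 := hmax _ hm.1
    have h2 : e + t • (e - c) - c = (1 + t) • (e - c) := by module
    rw [dist_eq_norm, dist_eq_norm, h2, norm_smul, Real.norm_of_nonneg (by linarith)] at h1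
    have := norm_pos_iff.2 hec
    nlinarith
  have hchord : ∀ S S' : Set (EuclideanSpace ℝ (Fin 2)), IsClosed S' → e ∉ S' →
      (∀ x ∈ closure G \ G, x ∈ S ∨ x ∈ S') →
      ∃ a b, a ≠ b ∧ openSegment ℝ a b ⊆ G ∧ a ∈ S ∧ b ∈ S := fun S S' hS' he' hSS' => by
    obtain ⟨δ, hδ, hball⟩ := Metric.isOpen_iff.1 hS'.isOpen_compl e he'
    obtain ⟨a, b, hab, ha, hb', hae, hbe, hseg⟩ := exists_chord hG hb he hmax hδ
    exact ⟨a, b, hab, hseg, (hSS' a ha).resolve_right (hball hae),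
      (hSS' b hb').resolve_right (hball hbe)⟩
  by_cases he₂ : e ∈ S₂
  · have he₁ : e ∉ S₁ := fun he₁ => by
      rcases hinter ⟨he₁, he₂⟩ with rfl | h
      · exact hA.not_ge hge
      · rw [Set.mem_singleton_iff.1 h] at hge
        exact hB.not_ge hge
    obtain ⟨a, b, hab, hseg, ha, hb'⟩ := hchord S₂ S₁ hS₁ he₁ fun x hx => (hfr x hx).symm
    exact ⟨a, b, hab, hseg, Or.inr ⟨ha, hb'⟩⟩
  · obtain ⟨a, b, hab, hseg, ha, hb'⟩ := hchord S₁ S₂ hS₂ he₂ hfr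
    exact ⟨a, b, hab, hseg, Or.inl ⟨ha, hb'⟩⟩

end hull

section sameImage

lemma IsMinimizing.not_openSegment_subset {E : Type*} [NormedAddCommGroup E] [NormedSpace ℝ E]
    {N : E → ℝ} {R : Set E} {P Q : E} {T : ℝ} {γ : ℝ → E} (hN : IsStrictGauge N)
    (h : IsMinimizing N R P Q T γ) {u v : ℝ} (hu : u ∈ Set.Icc 0 T) (hv : v ∈ Set.Icc 0 T)
    {a b : E} (ha : a ∈ γ '' Set.uIcc u v) (hb : b ∈ γ '' Set.uIcc u v) (hab : a ≠ b)
    {G : Set E} (hGR : G ⊆ R) (hG : Disjoint G (γ '' Set.uIcc u v)) :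
    ¬ openSegment ℝ a b ⊆ G := by
  obtain ⟨x, hx, rfl⟩ := ha
  obtain ⟨y, hy, rfl⟩ := hb
  intro hseg
  have hsub : Set.uIcc u v ⊆ Set.Icc 0 T := Set.ordConnected_Icc.uIcc_subset hu hv
  obtain ⟨m, hm, hmseg⟩ := h.exists_mem_openSegment hN (hsub hx) (hsub hy)
    (fun he => hab (by rw [he])) (by
      rw [← insert_endpoints_openSegment]
      exact Set.insert_subset (h.mem x) (Set.insert_subset (h.mem y) (hseg.trans hGR)))
  exact hG.notMem_of_mem_left (hseg hmseg)
    (Set.mem_image_of_mem _ (Set.ordConnected_uIcc.uIcc_subset hx hy hm))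

/-- In a planar region without holes, minimizing curves for two gauges have the same image. -/
lemma IsMinimizing.image_subset {N₁ N₂ : EuclideanSpace ℝ (Fin 2) → ℝ}
    {R : Set (EuclideanSpace ℝ (Fin 2))}
    (hR : ∀ L ⊆ R, IsClosed L → ∀ z ∉ L, Bornology.IsBounded (connectedComponentIn Lᶜ z) →
      connectedComponentIn Lᶜ z ⊆ R)
    {P Q : EuclideanSpace ℝ (Fin 2)} {T₁ T₂ : ℝ} {σ ρ : ℝ → EuclideanSpace ℝ (Fin 2)}
    (hPQ : P ≠ Q) (hN₁ : IsStrictGauge N₁) (hN₂ : IsStrictGauge N₂)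
    (hσ : IsMinimizing N₁ R P Q T₁ σ) (hρ : IsMinimizing N₂ R P Q T₂ ρ) :
    σ '' Set.Icc 0 T₁ ⊆ ρ '' Set.Icc 0 T₂ := by
  rintro _ ⟨s₀, hs₀, rfl⟩
  by_contra hs₀K
  have hσc := hσ.continuous hN₁
  have hρc := hρ.continuous hN₂
  have hT₁ := hσ.pos hN₁ hPQ
  have hT₂ := hρ.pos hN₂ hPQ
  set K := ρ '' Set.Icc 0 T₂ with hK
  have hKc : IsClosed K := (isCompact_Icc.image hρc).isClosed
  have h0K : σ 0 ∈ K := ⟨0, ⟨le_rfl, hT₂.le⟩, by rw [hσ.zero, hρ.zero]⟩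
  have hTK : σ T₁ ∈ K := ⟨T₂, ⟨hT₂.le, le_rfl⟩, by
    rw [hσ.apply_of_le hN₁ le_rfl, hρ.apply_of_le hN₂ le_rfl]⟩
  set U : Set ℝ := σ ⁻¹' Kᶜ ∩ Set.Ioo 0 T₁ with hU
  have hUo : IsOpen U := (hKc.isOpen_compl.preimage hσc).inter isOpen_Ioo
  have hUb : Bornology.IsBounded U := (Metric.isBounded_Ioo 0 T₁).subset Set.inter_subset_right
  have hs₀U : s₀ ∈ U := ⟨hs₀K, hs₀.1.lt_of_ne (by rintro rfl; exact hs₀K h0K),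
    hs₀.2.lt_of_ne (by rintro rfl; exact hs₀K hTK)⟩
  have hexit : ∀ x ∈ closure U \ U, x ∈ Set.Icc 0 T₁ ∧ σ x ∈ K := fun x hx => by
    have hx' : x ∈ Set.Icc 0 T₁ :=
      closure_minimal (Set.inter_subset_right.trans Set.Ioo_subset_Icc_self) isClosed_Icc hx.1
    refine ⟨hx', ?_⟩
    by_contra hxK
    exact hx.2 ⟨hxK, hx'.1.lt_of_ne (by rintro rfl; exact hxK h0K),
      hx'.2.lt_of_ne (by rintro rfl; exact hxK hTK)⟩
  obtain ⟨r, hr, hrm, hrU⟩ := exists_exit_time hUo hUb hs₀U (one_ne_zero (α := ℝ))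
  obtain ⟨l, hl, hlm, hlU⟩ := exists_exit_time hUo hUb hs₀U (neg_ne_zero.2 (one_ne_zero (α := ℝ)))
  simp only [smul_eq_mul, mul_one, mul_neg, ← sub_eq_add_neg] at hrm hrU hlm hlU
  obtain ⟨hs, t, ht, hts⟩ := hexit _ hlm
  obtain ⟨hs', t', ht', hts'⟩ := hexit _ hrm
  set s := s₀ - l with hsdef
  set s' := s₀ + r with hsdef'
  have hss' : s < s' := by linarith
  have hmid : ∀ x ∈ Set.Ioo s s', σ x ∉ K := fun x hx => by
    rcases le_total x s₀ with h | h
    · have := (hlU (s₀ - x) (by linarith) (by linarith [hx.1])).1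
      rwa [sub_sub_cancel] at this
    · have := (hrU (x - s₀) (by linarith) (by linarith [hx.2])).1
      rwa [add_sub_cancel] at this
  have htt' : t ≠ t' := by
    rintro rfl
    exact hss'.ne (hσ.injOn hN₁ hs hs' (hts.symm.trans hts'))
  have hsub₁ : Set.uIcc s s' ⊆ Set.Icc 0 T₁ := Set.ordConnected_Icc.uIcc_subset hs hs'
  have hsub₂ : Set.uIcc t t' ⊆ Set.Icc 0 T₂ := Set.ordConnected_Icc.uIcc_subset ht ht'
  have hαi := injOn_subarc hss'.ne ((hσ.injOn hN₁).mono hsub₁)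
  have hβi := injOn_subarc htt' ((hρ.injOn hN₂).mono hsub₂)
  have h0 : subarc σ s s' 0 = subarc ρ t t' 0 := by rw [subarc_zero, subarc_zero, hts]
  have h1 : subarc σ s s' 1 = subarc ρ t t' 1 := by rw [subarc_one, subarc_one, hts']
  have hinter : ∀ x ∈ σ '' Set.uIcc s s', x ∈ ρ '' Set.uIcc t t' → x = σ s ∨ x = σ s' := by
    rintro _ ⟨x, hx, rfl⟩ hxρ
    rw [Set.uIcc_of_le hss'.le] at hx
    rcases hx.1.eq_or_lt with rfl | h1
    · exact Or.inl rfl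
    · rcases hx.2.eq_or_lt with rfl | h2
      · exact Or.inr rfl
      · exact (hmid x ⟨h1, h2⟩ (Set.image_mono hsub₂ hxρ)).elim
  have hdisj : ∀ x ∈ Set.Icc (0 : ℝ) 1, ∀ y ∈ Set.Icc (0 : ℝ) 1,
      subarc σ s s' x = subarc ρ t t' y → (x = 0 ∧ y = 0) ∨ (x = 1 ∧ y = 1) := by
    intro x hx y hy hxy
    have hi0 : (0 : ℝ) ∈ Set.Icc (0 : ℝ) 1 := by simp
    have hi1 : (1 : ℝ) ∈ Set.Icc (0 : ℝ) 1 := by simp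
    have hm₁ : subarc σ s s' x ∈ σ '' Set.uIcc s s' := by
      rw [← subarc_image_Icc]; exact Set.mem_image_of_mem _ hx
    have hm₂ : subarc σ s s' x ∈ ρ '' Set.uIcc t t' := by
      rw [hxy, ← subarc_image_Icc]; exact Set.mem_image_of_mem _ hy
    rcases hinter _ hm₁ hm₂ with h | h
    · rw [← subarc_zero (γ := σ) (u := s) (v := s')] at h
      exact Or.inl ⟨hαi hx hi0 h, hβi hy hi0 (hxy.symm.trans (h.trans h0))⟩
    · rw [← subarc_one (γ := σ) (u := s) (v := s')] at h
      exact Or.inr ⟨hαi hx hi1 h, hβi hy hi1 (hxy.symm.trans (h.trans h1))⟩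
  obtain ⟨z, hz, hb⟩ := exists_bounded_component (continuous_subarc hσc) (continuous_subarc hρc)
    hαi hβi h0 h1 hdisj
  rw [subarc_image_Icc, subarc_image_Icc] at hz hb
  have hS₁ : IsClosed (σ '' Set.uIcc s s') := (isCompact_uIcc.image hσc).isClosed
  have hS₂ : IsClosed (ρ '' Set.uIcc t t') := (isCompact_uIcc.image hρc).isClosed
  obtain ⟨a, b, hab, hseg, hmem⟩ := exists_chord_of_bounded_component hS₁ hS₂
    (fun x hx => hinter x hx.1 hx.2) hz hb
  have hGR := hR _ (Set.union_subset (Set.image_subset_iff.2 fun x _ => hσ.mem x)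
    (Set.image_subset_iff.2 fun x _ => hρ.mem x)) (hS₁.union hS₂) z hz hb
  have hG := (Set.disjoint_compl_left_iff_subset.2 le_rfl).mono_left
    (connectedComponentIn_subset (σ '' Set.uIcc s s' ∪ ρ '' Set.uIcc t t')ᶜ z)
  rcases hmem with ⟨ha, hb'⟩ | ⟨ha, hb'⟩
  · exact hσ.not_openSegment_subset hN₁ hs hs' ha hb' hab hGR
      (hG.mono_right Set.subset_union_left) hseg
  · exact hρ.not_openSegment_subset hN₂ ht ht' ha hb' hab hGR
      (hG.mono_right Set.subset_union_right) hseg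

end sameImage

section length

open MeasureTheory

lemma LipschitzWith.intervalIntegrable_comp_deriv {E : Type*} [NormedAddCommGroup E]
    [NormedSpace ℝ E] [FiniteDimensional ℝ E] {c : ℝ → E} {K : NNReal} (hc : LipschitzWith K c)
    {h : E → ℝ} (hh : Continuous h) (a b : ℝ) :
    IntervalIntegrable (fun t => h (deriv c t)) volume a b := by
  have := FiniteDimensional.proper ℝ E
  obtain ⟨C, hC⟩ := (isCompact_closedBall (0 : E) K).exists_bound_of_continuousOn hh.continuousOn
  refine (intervalIntegrable_const (c := C)).mono_fun
    (hh.comp_aestronglyMeasurable (aestronglyMeasurable_deriv c _)) (Filter.Eventually.of_forall ?_)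
  intro t
  refine (hC _ ?_).trans (le_abs_self C)
  rw [mem_closedBall_zero_iff]
  exact norm_deriv_le_of_lipschitz hc

/-- If the increments of a curve, measured by a positively homogeneous function, are bounded by the
increments of a monotone function, then so is its length. -/
lemma integral_comp_deriv_le {E : Type*} [NormedAddCommGroup E] [NormedSpace ℝ E]
    [FiniteDimensional ℝ E] {h : E → ℝ} (hh : Continuous h) (h0 : ∀ x, 0 ≤ h x)
    (hsmul : ∀ c : ℝ, 0 ≤ c → ∀ x, h (c • x) = c * h x) {τ : ℝ → E} {K : NNReal}
    (hτ : LipschitzWith K τ) {ψ : ℝ → ℝ} (hψ : Monotone ψ)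
    (hle : ∀ s ∈ Set.Icc (0 : ℝ) 1, ∀ t ∈ Set.Icc (0 : ℝ) 1, s ≤ t → h (τ t - τ s) ≤ ψ t - ψ s) :
    ∫ t in (0 : ℝ)..1, h (deriv τ t) ≤ ψ 1 - ψ 0 := by
  have hψ' : MonotoneOn ψ (Set.uIcc 0 1) := hψ.monotoneOn _
  have hint : ∫ t in (0 : ℝ)..1, deriv ψ t ≤ ψ 1 - ψ 0 := by
    have := hψ'.intervalIntegral_deriv_mem_uIcc
    rw [Set.uIcc_of_le (sub_nonneg.2 (hψ zero_le_one))] at this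
    exact this.2
  refine le_trans ?_ hint
  rw [intervalIntegral.integral_of_le zero_le_one, intervalIntegral.integral_of_le zero_le_one,
    integral_Ioc_eq_integral_Ioo, integral_Ioc_eq_integral_Ioo]
  refine integral_mono_of_nonneg (Filter.Eventually.of_forall fun t => h0 _)
    ((hψ'.intervalIntegrable_deriv.1).mono_set Set.Ioo_subset_Ioc_self) ?_
  filter_upwards [ae_restrict_mem measurableSet_Ioo, ae_restrict_of_ae hτ.ae_differentiableAt_real,
    ae_restrict_of_ae hψ.ae_differentiableAt] with t ht hτt hψt
  have h1 := (hh.tendsto _).comp hτt.hasDerivAt.tendsto_slope_zero_right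
  have h2 := hψt.hasDerivAt.tendsto_slope_zero_right
  refine le_of_tendsto_of_tendsto h1 h2 ?_
  have hmem : Set.Ioo (0 : ℝ) (1 - t) ∈ nhdsWithin (0 : ℝ) (Set.Ioi 0) :=
    Ioo_mem_nhdsGT (by linarith [ht.2])
  filter_upwards [hmem] with k hk
  have hk0 := hk.1
  rw [Function.comp_apply, hsmul _ (inv_nonneg.2 hk0.le), smul_eq_mul]
  refine mul_le_mul_of_nonneg_left ?_ (inv_nonneg.2 hk0.le)
  exact hle t ⟨ht.1.le, ht.2.le⟩ (t + k) ⟨by linarith [ht.1], by linarith [hk.2]⟩ (by linarith)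

lemma IsStrictGauge.le_integral_comp_deriv {E : Type*} [NormedAddCommGroup E] [NormedSpace ℝ E]
    [FiniteDimensional ℝ E] {N : E → ℝ} (hN : IsStrictGauge N) {c : ℝ → E} {K : NNReal}
    (hc : LipschitzWith K c) {a b : ℝ} (hab : a ≤ b) :
    N (c b - c a) ≤ ∫ t in a..b, N (deriv c t) := by
  by_cases hv : c b - c a = 0
  · rw [hv, hN.zero]
    exact intervalIntegral.integral_nonneg hab fun t _ => hN.nonneg _
  obtain ⟨g, hg, hgN⟩ := exists_extension_of_le_sublinear
    (LinearPMap.mkSpanSingleton (c b - c a) (N (c b - c a)) hv) N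
    (fun r hr => hN.smul r hr.le) hN.add_le (by
      rintro ⟨x, hx⟩
      obtain ⟨r, rfl⟩ := Submodule.mem_span_singleton.1 hx
      rw [LinearPMap.mkSpanSingleton'_apply]
      rcases le_total 0 r with hr | hr
      · simp [hN.smul r hr]
      · exact (mul_nonpos_of_nonpos_of_nonneg hr (hN.nonneg _)).trans (hN.nonneg _))
  have hgv : g (c b - c a) = N (c b - c a) := by
    have := hg ⟨c b - c a, Submodule.mem_span_singleton_self _⟩
    rw [this]
    exact LinearPMap.mkSpanSingleton'_apply_self _ _ _ _
  set G := LinearMap.toContinuousLinearMap g with hG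
  have hGc : LipschitzWith (‖G‖₊ * K) (G ∘ c) := G.lipschitz.comp hc
  have hftc := (hGc.lipschitzOnWith (s := Set.uIcc a b)).absolutelyContinuousOnInterval
  have h1 := hftc.integral_deriv_eq_sub
  have h2 : G (c b) - G (c a) = N (c b - c a) := by rw [← map_sub]; exact hgv
  rw [Function.comp_apply, Function.comp_apply, h2] at h1
  rw [← h1]
  refine intervalIntegral.integral_mono_ae hab hftc.intervalIntegrable_deriv
    (hc.intervalIntegrable_comp_deriv hN.continuous a b) ?_
  filter_upwards [hc.ae_differentiableAt_real] with t ht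
  rw [(G.hasFDerivAt.comp_hasDerivAt t ht.hasDerivAt).deriv]
  exact hgN _

/-- A Lipschitz curve can be parametrized by its length. -/
lemma exists_isAdmissible {E : Type*} [NormedAddCommGroup E] [NormedSpace ℝ E]
    [FiniteDimensional ℝ E] {N : E → ℝ} (hN : IsStrictGauge N) {R : Set E} {c : ℝ → E} {K : NNReal}
    (hc : LipschitzWith K c) (hR : ∀ t ∈ Set.Icc (0 : ℝ) 1, c t ∈ R) :
    ∃ γ, IsAdmissible N R (c 0) (c 1) (∫ t in (0 : ℝ)..1, N (deriv c t)) γ := by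
  set φ : ℝ → ℝ := fun x => ∫ t in (0 : ℝ)..x, N (deriv c t) with hφ
  have hi := hc.intervalIntegrable_comp_deriv hN.continuous
  have hφc : Continuous φ := intervalIntegral.continuous_primitive hi 0
  have hφ0 : φ 0 = 0 := intervalIntegral.integral_same
  have hle : ∀ a b, a ≤ b → N (c b - c a) ≤ φ b - φ a := fun a b hab => by
    rw [hφ, intervalIntegral.integral_interval_sub_left (hi _ _) (hi _ _)]
    exact hN.le_integral_comp_deriv hc hab
  have hφm : Monotone φ := fun a b hab => sub_nonneg.1 ((hN.nonneg _).trans (hle a b hab))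
  have hℓ : 0 ≤ φ 1 := hφ0 ▸ hφm zero_le_one
  have hsurj : ∀ x ∈ Set.Icc 0 (φ 1), ∃ t ∈ Set.Icc (0 : ℝ) 1, φ t = x := fun x hx => by
    obtain ⟨t, ht, rfl⟩ := intermediate_value_Icc zero_le_one hφc.continuousOn (hφ0.symm ▸ hx)
    exact ⟨t, ht, rfl⟩
  choose! g hg hφg using hsurj
  set p : ℝ → ℝ := fun t => Set.projIcc 0 (φ 1) hℓ t with hp
  have hpm : ∀ t, p t ∈ Set.Icc 0 (φ 1) := fun t => Subtype.mem _
  refine ⟨fun t => c (g (p t)), fun t => hR _ (hg _ (hpm t)), fun s t hst => ?_, ?_, fun t => ?_⟩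
  · have hpst : p s ≤ p t := Set.monotone_projIcc hℓ hst
    have hsub : p t - p s ≤ t - s := by
      simp only [hp, Set.coe_projIcc]
      rcases max_cases 0 (min (φ 1) t) with h | h <;> rcases max_cases 0 (min (φ 1) s) with h' | h'
        <;> rcases min_cases (φ 1) t with h'' | h'' <;> rcases min_cases (φ 1) s with h''' | h'''
        <;> linarith
    rcases le_total (g (p s)) (g (p t)) with h | h
    · refine (hle _ _ h).trans ?_
      rwa [hφg _ (hpm t), hφg _ (hpm s)]
    · have h1 := hφm h
      rw [hφg _ (hpm t), hφg _ (hpm s)] at h1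
      simp only [le_antisymm h1 hpst]
      rw [sub_self, hN.zero]
      linarith
  · have h0 : p 0 = 0 := by simp [hp, Set.coe_projIcc, hℓ]
    have h0m : (0 : ℝ) ∈ Set.Icc 0 (φ 1) := ⟨le_rfl, hℓ⟩
    have h1 := hle 0 (g 0) (hg 0 h0m).1
    rw [hφg 0 h0m, hφ0, sub_self] at h1
    simp only [h0]
    exact sub_eq_zero.1 (hN.eq_zero_of_le h1)
  · refine (hle _ _ (hg _ (hpm t)).2).trans ?_
    rw [hφg _ (hpm t)]
    simp only [hp, Set.coe_projIcc]
    rcases max_cases 0 (min (φ 1) t) with h | h <;> rcases min_cases (φ 1) t with h' | h'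
      <;> rcases max_cases (φ 1 - t) 0 with h'' | h'' <;> linarith

end length

section region

variable {E : Type*} [NormedAddCommGroup E]

/-- The closed region enclosed by `L`. -/
def enclosedRegion (L : Set E) : Set E :=
  {x | x ∈ L ∨ Bornology.IsBounded (connectedComponentIn Lᶜ x)}

lemma disjoint_connectedComponentIn_enclosedRegion {L : Set E} {x : E}
    (hx : x ∉ enclosedRegion L) : Disjoint (connectedComponentIn Lᶜ x) (enclosedRegion L) := by
  rw [Set.disjoint_left]
  rintro y hy (hyL | hyb)
  · exact connectedComponentIn_subset _ _ hy hyL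
  · rw [← connectedComponentIn_eq hy] at hyb
    exact hx (Or.inr hyb)

lemma isClosed_enclosedRegion [NormedSpace ℝ E] {L : Set E} (hL : IsClosed L) : IsClosed (enclosedRegion L) := by
  rw [← isOpen_compl_iff, isOpen_iff_mem_nhds]
  intro x hx
  have hxL : x ∈ Lᶜ := fun h => hx (Or.inl h)
  exact Filter.mem_of_superset
    (hL.isOpen_compl.connectedComponentIn.mem_nhds (mem_connectedComponentIn hxL))
    (disjoint_connectedComponentIn_enclosedRegion hx).subset_compl_right

lemma isBounded_enclosedRegion [NormedSpace ℝ E] {L : Set E} (hL : Bornology.IsBounded L) :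
    Bornology.IsBounded (enclosedRegion L) := by
  obtain ⟨r, hr, hLr⟩ := hL.subset_ball_lt 0 0
  refine (Metric.isBounded_ball (x := (0 : E)) (r := r)).subset fun x hx => ?_
  by_contra hxr
  rw [mem_ball_zero_iff, not_lt] at hxr
  have hray : ∀ t ∈ Set.Ici (1 : ℝ), r * t ≤ ‖t • x‖ := fun t ht => by
    rw [norm_smul, Real.norm_of_nonneg (zero_le_one.trans ht), mul_comm]
    exact mul_le_mul_of_nonneg_left hxr (zero_le_one.trans ht)
  have hrayL : ∀ t ∈ Set.Ici (1 : ℝ), t • x ∈ Lᶜ := fun t ht htL => by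
    have h1 := hLr htL
    rw [mem_ball_zero_iff] at h1
    have h2 : (1 : ℝ) ≤ t := ht
    nlinarith [hray t ht]
  have hb := hx.resolve_left (by simpa using hrayL 1 (Set.mem_Ici.2 le_rfl))
  have hsub : (fun t : ℝ => t • x) '' Set.Ici 1 ⊆ connectedComponentIn Lᶜ x :=
    (isPreconnected_Ici.image _ (by fun_prop)).subset_connectedComponentIn
      ⟨1, Set.mem_Ici.2 le_rfl, one_smul _ _⟩ (Set.image_subset_iff.2 hrayL)
  obtain ⟨C, hC⟩ := hb.exists_norm_le
  have h1 : (1 : ℝ) ≤ max 1 ((C + 1) / r) := le_max_left _ _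
  have h2 := (hray _ h1).trans (hC _ (hsub ⟨_, h1, rfl⟩))
  have h3 : r * ((C + 1) / r) ≤ r * max 1 ((C + 1) / r) :=
    mul_le_mul_of_nonneg_left (le_max_right _ _) hr.le
  rw [mul_div_cancel₀ _ hr.ne'] at h3
  linarith

lemma connectedComponentIn_subset_enclosedRegion {L L' : Set E} (hL' : L' ⊆ enclosedRegion L)
    {z : E} (hb : Bornology.IsBounded (connectedComponentIn L'ᶜ z)) :
    connectedComponentIn L'ᶜ z ⊆ enclosedRegion L := by
  intro x hx
  by_contra hxL
  refine hxL (Or.inr (hb.subset ?_))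
  rw [connectedComponentIn_eq hx]
  exact isPreconnected_connectedComponentIn.subset_connectedComponentIn
    (mem_connectedComponentIn fun h => hxL (Or.inl h))
    ((disjoint_connectedComponentIn_enclosedRegion hxL).mono_right hL').subset_compl_right

end region

section comparison

lemma isStrictGauge_add_norm {E : Type*} [NormedAddCommGroup E] [NormedSpace ℝ E]
    [StrictConvexSpace ℝ E] {h : E → ℝ} (hc : Continuous h) (h0 : ∀ x, 0 ≤ h x)
    (hadd : ∀ x y, h (x + y) ≤ h x + h y) (hsmul : ∀ c : ℝ, 0 ≤ c → ∀ x, h (c • x) = c * h x)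
    {ε : ℝ} (hε : 0 < ε) : IsStrictGauge fun x => h x + ε * ‖x‖ where
  continuous := by fun_prop
  add_le x y := by nlinarith [hadd x y, norm_add_le x y]
  smul c hc x := by rw [hsmul c hc, norm_smul, Real.norm_of_nonneg hc]; ring
  exists_le := ⟨ε, hε, fun x => le_add_of_nonneg_left (h0 x)⟩
  sameRay x y hxy := by
    refine sameRay_iff_norm_add.2 ((norm_add_le x y).antisymm ?_)
    have := hadd x y
    refine le_of_mul_le_mul_left ?_ hε
    linarith

lemma isStrictGauge_norm {E : Type*} [NormedAddCommGroup E] [NormedSpace ℝ E]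
    [StrictConvexSpace ℝ E] : IsStrictGauge fun x : E => ‖x‖ := by
  simpa using isStrictGauge_add_norm (h := fun _ : E => 0) continuous_const (by simp) (by simp)
    (by simp) one_pos

lemma IsMinimizing.exists_monotone {E : Type*} [NormedAddCommGroup E] [NormedSpace ℝ E]
    {N₁ N₂ : E → ℝ} {R : Set E} {P Q : E} {T₁ T₂ : ℝ} {σ ρ : ℝ → E} (hPQ : P ≠ Q)
    (hN₁ : IsStrictGauge N₁) (hN₂ : IsStrictGauge N₂) (hσ : IsMinimizing N₁ R P Q T₁ σ)
    (hρ : IsMinimizing N₂ R P Q T₂ ρ) (hsub : σ '' Set.Icc 0 T₁ ⊆ ρ '' Set.Icc 0 T₂) :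
    ∃ ψ : ℝ → ℝ, Monotone ψ ∧ ψ 0 = 0 ∧ ψ T₁ = T₂ ∧
      ∀ s ∈ Set.Icc 0 T₁, ∀ t ∈ Set.Icc 0 T₁, s ≤ t → N₂ (σ t - σ s) ≤ ψ t - ψ s := by
  have hT₁ := hσ.pos hN₁ hPQ
  have hT₂ := hρ.pos hN₂ hPQ
  have : Fact ((0 : ℝ) ≤ T₁) := ⟨hT₁.le⟩
  have : ∀ s : Set.Icc 0 T₁, ∃ t : Set.Icc 0 T₂, ρ t = σ s := fun s => by
    obtain ⟨t, ht, hts⟩ := hsub ⟨s, s.2, rfl⟩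
    exact ⟨⟨t, ht⟩, hts⟩
  choose θ hθ using this
  have hρi : Function.Injective fun t : Set.Icc 0 T₂ => ρ t :=
    (hρ.injOn hN₂).injective
  have hemb : Topology.IsClosedEmbedding fun t : Set.Icc 0 T₂ => ρ t :=
    ((hρ.continuous hN₂).comp continuous_subtype_val).isClosedEmbedding hρi
  have hθc : Continuous θ := by
    rw [hemb.isEmbedding.continuous_iff]
    exact ((hσ.continuous hN₁).comp continuous_subtype_val).congr fun s => (hθ s).symm
  have hθi : Function.Injective θ := fun s t hst =>
    Subtype.ext (hσ.injOn hN₁ s.2 t.2 (by rw [← hθ, ← hθ, hst]))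
  have hθ0 : θ ⟨0, le_rfl, hT₁.le⟩ = ⟨0, le_rfl, hT₂.le⟩ := hρi (by
    simp only [hθ, hσ.zero, hρ.zero])
  have hθT : θ ⟨T₁, hT₁.le, le_rfl⟩ = ⟨T₂, hT₂.le, le_rfl⟩ := hρi (by
    simp only [hθ, hσ.apply_of_le hN₁ le_rfl, hρ.apply_of_le hN₂ le_rfl])
  have hmono : StrictMono θ := hθc.strictMono_of_inj_boundedOrder
    (by
      change θ ⟨0, le_rfl, hT₁.le⟩ ≤ θ ⟨T₁, hT₁.le, le_rfl⟩
      rw [hθ0, hθT]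
      exact hT₂.le) hθi
  refine ⟨fun s => θ (Set.projIcc 0 T₁ hT₁.le s), fun s t hst =>
    hmono.monotone (Set.monotone_projIcc _ hst), ?_, ?_, fun s hs t ht hst => ?_⟩
  · simp only [Set.projIcc_left, hθ0]
  · simp only [Set.projIcc_right, hθT]
  · simp only [Set.projIcc_of_mem _ hs, Set.projIcc_of_mem _ ht]
    have := hρ.le _ _ (hmono.monotone (show (⟨s, hs⟩ : Set.Icc 0 T₁) ≤ ⟨t, ht⟩ from hst))
    rwa [hθ, hθ] at this

/-- In a planar region without holes, a Euclidean shortest curve is also shortest for every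
nonnegative sublinear integrand. -/
lemma IsMinimizing.integral_comp_deriv_le {R : Set (EuclideanSpace ℝ (Fin 2))}
    (hRc : IsCompact R)
    (hR : ∀ L ⊆ R, IsClosed L → ∀ z ∉ L, Bornology.IsBounded (connectedComponentIn Lᶜ z) →
      connectedComponentIn Lᶜ z ⊆ R)
    {P Q : EuclideanSpace ℝ (Fin 2)} (hPQ : P ≠ Q) {T : ℝ} {σ : ℝ → EuclideanSpace ℝ (Fin 2)}
    (hσ : IsMinimizing (fun x => ‖x‖) R P Q T σ) {K₀ : NNReal}
    (hσL : LipschitzWith K₀ fun t => σ (T * t))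
    {h : EuclideanSpace ℝ (Fin 2) → ℝ} (hc : Continuous h) (h0 : ∀ x, 0 ≤ h x)
    (hadd : ∀ x y, h (x + y) ≤ h x + h y) (hsmul : ∀ c : ℝ, 0 ≤ c → ∀ x, h (c • x) = c * h x)
    {c : ℝ → EuclideanSpace ℝ (Fin 2)} {K : NNReal} (hcL : LipschitzWith K c)
    (hcR : ∀ t ∈ Set.Icc (0 : ℝ) 1, c t ∈ R) (hcP : c 0 = P) (hcQ : c 1 = Q) :
    ∫ t in (0 : ℝ)..1, h (deriv (fun t => σ (T * t)) t) ≤ ∫ t in (0 : ℝ)..1, h (deriv c t) := by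
  set M := ∫ t in (0 : ℝ)..1, ‖deriv c t‖ with hM
  have hM0 : 0 ≤ M := intervalIntegral.integral_nonneg zero_le_one fun t _ => norm_nonneg _
  have hT := hσ.pos isStrictGauge_norm hPQ
  refine le_of_forall_pos_le_add fun δ hδ => ?_
  set ε := δ / (M + 1) with hε
  have hε0 : 0 < ε := by positivity
  have hN := isStrictGauge_add_norm hc h0 hadd hsmul hε0
  obtain ⟨γ, hγ⟩ := exists_isAdmissible hN hcL hcR
  rw [hcP, hcQ] at hγ
  obtain ⟨T', ρ, hρ⟩ := hγ.exists_isMinimizing hN hRc hPQ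
  obtain ⟨ψ, hψ, hψ0, hψT, hψle⟩ := hσ.exists_monotone hPQ isStrictGauge_norm hN hρ
    (hσ.image_subset hR hPQ isStrictGauge_norm hN hρ)
  have hmem : ∀ t ∈ Set.Icc (0 : ℝ) 1, T * t ∈ Set.Icc 0 T := fun t ht =>
    ⟨mul_nonneg hT.le ht.1, mul_le_of_le_one_right hT.le ht.2⟩
  calc ∫ t in (0 : ℝ)..1, h (deriv (fun t => σ (T * t)) t)
      ≤ ψ (T * 1) - ψ (T * 0) := by
        refine _root_.integral_comp_deriv_le hc h0 hsmul hσL (ψ := fun t => ψ (T * t))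
          (fun s t hst => hψ (mul_le_mul_of_nonneg_left hst hT.le)) fun s hs t ht hst => ?_
        refine le_trans ?_ (hψle _ (hmem s hs) _ (hmem t ht) (mul_le_mul_of_nonneg_left hst hT.le))
        exact le_add_of_nonneg_right (by positivity)
    _ = T' := by rw [mul_one, mul_zero, hψ0, hψT, sub_zero]
    _ ≤ ∫ t in (0 : ℝ)..1, (h (deriv c t) + ε * ‖deriv c t‖) := hρ.min _ _ hγ
    _ = (∫ t in (0 : ℝ)..1, h (deriv c t)) + ε * M := by
        rw [intervalIntegral.integral_add (hcL.intervalIntegrable_comp_deriv hc 0 1)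
          ((hcL.intervalIntegrable_comp_deriv continuous_norm 0 1).const_mul ε),
          intervalIntegral.integral_const_mul]
    _ ≤ (∫ t in (0 : ℝ)..1, h (deriv c t)) + δ := by
        have : ε * (M + 1) = δ := div_mul_cancel₀ _ (by positivity)
        linarith

end comparison

/-- Given a nonnegative, convex, positively 1-homogeneous
`𝔥 : ℝ² → ℝ`, and two injective Lipschitz paths `τ₁, τ₂ : [0,1] → ℝ²` from `P` to `Q`
and from `Q` to `P` respectively, having no intersection except `P` and `Q`,
there exists an injective Lipschitz path `τ` from `P` to `Q`, entirely contained in the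
closed region `R` enclosed by `τ₁ ∪ τ₂` (the complement of the unbounded connected
component of the complement of the union of the two paths), such that
`len τ + len τ̂ ≤ len τ₁ + len τ₂`, where `τ̂ t = τ (1 - t)`. -/
theorem statement_1 (𝔥 : EuclideanSpace ℝ (Fin 2) → ℝ)
    (h_nonneg : ∀ v, 0 ≤ 𝔥 v)
    (h_convex : ConvexOn ℝ Set.univ 𝔥)
    (h_homog : ∀ c : ℝ, 0 ≤ c → ∀ v, 𝔥 (c • v) = c * 𝔥 v)
    (τ₁ τ₂ : ℝ → EuclideanSpace ℝ (Fin 2)) (K₁ K₂ : NNReal)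
    (hτ₁ : LipschitzWith K₁ τ₁) (hτ₂ : LipschitzWith K₂ τ₂)
    (hinj₁ : Set.InjOn τ₁ (Set.Icc 0 1)) (hinj₂ : Set.InjOn τ₂ (Set.Icc 0 1))
    (P Q : EuclideanSpace ℝ (Fin 2)) (hPQ : P ≠ Q)
    (hP₁ : τ₁ 0 = P) (hP₂ : τ₂ 1 = P) (hQ₁ : τ₁ 1 = Q) (hQ₂ : τ₂ 0 = Q)
    (hint : ∀ s ∈ Set.Icc (0:ℝ) 1, ∀ t ∈ Set.Icc (0:ℝ) 1,
      τ₁ s = τ₂ t → (s = 0 ∧ t = 1) ∨ (s = 1 ∧ t = 0)) :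
    -- `R` is the closed region enclosed by `τ₁ ∪ τ₂`: the complement of the unbounded
    -- connected component of the complement of the union of the two paths.
    ∃ (τ : ℝ → EuclideanSpace ℝ (Fin 2)) (K : NNReal),
      LipschitzWith K τ ∧ Set.InjOn τ (Set.Icc 0 1) ∧
      τ 0 = P ∧ τ 1 = Q ∧
      (∀ t ∈ Set.Icc (0:ℝ) 1,
        τ t ∈ {x : EuclideanSpace ℝ (Fin 2) |
          x ∈ τ₁ '' Set.Icc 0 1 ∪ τ₂ '' Set.Icc 0 1 ∨
          Bornology.IsBounded
            (connectedComponentIn (τ₁ '' Set.Icc 0 1 ∪ τ₂ '' Set.Icc 0 1)ᶜ x)}) ∧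
      (∫ t in (0:ℝ)..1, 𝔥 (deriv τ t)) +
          (∫ t in (0:ℝ)..1, 𝔥 (deriv (fun s => τ (1 - s)) t))
        ≤ (∫ t in (0:ℝ)..1, 𝔥 (deriv τ₁ t)) + (∫ t in (0:ℝ)..1, 𝔥 (deriv τ₂ t)) := by
  have hcont : Continuous 𝔥 := continuousOn_univ.1 (h_convex.continuousOn isOpen_univ)
  have hadd : ∀ x y, 𝔥 (x + y) ≤ 𝔥 x + 𝔥 y := fun x y => by
    have h1 := h_convex.2 (Set.mem_univ x) (Set.mem_univ y) (show (0 : ℝ) ≤ 1 / 2 by norm_num)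
      (show (0 : ℝ) ≤ 1 / 2 by norm_num) (by norm_num)
    rw [← smul_add, h_homog _ (by norm_num), smul_eq_mul, smul_eq_mul] at h1
    linarith
  set L := τ₁ '' Set.Icc 0 1 ∪ τ₂ '' Set.Icc 0 1 with hL
  have hLc : IsCompact L :=
    (isCompact_Icc.image hτ₁.continuous).union (isCompact_Icc.image hτ₂.continuous)
  have hRc : IsCompact (enclosedRegion L) := Metric.isCompact_of_isClosed_isBounded
    (isClosed_enclosedRegion hLc.isClosed) (isBounded_enclosedRegion hLc.isBounded)
  have hR : ∀ L' ⊆ enclosedRegion L, IsClosed L' → ∀ z ∉ L',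
      Bornology.IsBounded (connectedComponentIn L'ᶜ z) →
      connectedComponentIn L'ᶜ z ⊆ enclosedRegion L :=
    fun _ hL' _ _ _ hb => connectedComponentIn_subset_enclosedRegion hL' hb
  have hR₁ : ∀ t ∈ Set.Icc (0 : ℝ) 1, τ₁ t ∈ enclosedRegion L := fun t ht =>
    Or.inl (Or.inl ⟨t, ht, rfl⟩)
  obtain ⟨γ, hγ⟩ := exists_isAdmissible isStrictGauge_norm hτ₁ hR₁
  rw [hP₁, hQ₁] at hγ
  obtain ⟨T, σ, hσ⟩ := hγ.exists_isMinimizing isStrictGauge_norm hRc hPQ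
  have hT := hσ.pos isStrictGauge_norm hPQ
  have hσL : LipschitzWith ⟨T, hT.le⟩ fun t => σ (T * t) := by
    refine LipschitzWith.of_dist_le_mul fun s t => ?_
    have key : ∀ s t, s ≤ t → dist (σ (T * s)) (σ (T * t)) ≤ T * dist s t := fun s t hst => by
      rw [dist_comm, dist_eq_norm, dist_comm, Real.dist_eq, abs_of_nonneg (sub_nonneg.2 hst),
        mul_sub]
      exact hσ.le _ _ (mul_le_mul_of_nonneg_left hst hT.le)
    rcases le_total s t with hst | hst
    · exact key s t hst
    · rw [dist_comm, dist_comm s]; exact key t s hst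
  refine ⟨fun t => σ (T * t), ⟨T, hT.le⟩, hσL, fun s hs t ht hst => ?_, by simp [hσ.zero],
    by simp [hσ.apply_of_le isStrictGauge_norm le_rfl], fun t _ => hσ.mem _, ?_⟩
  · have hmem : ∀ t ∈ Set.Icc (0 : ℝ) 1, T * t ∈ Set.Icc 0 T := fun t ht =>
      ⟨mul_nonneg hT.le ht.1, mul_le_of_le_one_right hT.le ht.2⟩
    exact mul_left_cancel₀ hT.ne' (hσ.injOn isStrictGauge_norm (hmem s hs) (hmem t ht) hst)
  · have hrev : ∀ c : ℝ → EuclideanSpace ℝ (Fin 2),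
        ∫ t in (0 : ℝ)..1, 𝔥 (deriv (fun s => c (1 - s)) t) =
          ∫ t in (0 : ℝ)..1, 𝔥 (-deriv c t) := fun c => by
      have h1 := intervalIntegral.integral_comp_sub_left (a := 0) (b := 1)
        (fun t => 𝔥 (-deriv c t)) 1
      rw [sub_self, sub_zero] at h1
      rw [← h1]
      exact intervalIntegral.integral_congr fun t _ => by simp only [deriv_comp_const_sub]
    have hL₂ : LipschitzWith K₂ fun t => τ₂ (1 - t) :=
      LipschitzWith.of_dist_le_mul fun s t => by
        simpa only [dist_sub_left] using hτ₂.dist_le_mul (1 - s) (1 - t)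
    have h1 := hσ.integral_comp_deriv_le hRc hR hPQ hσL hcont h_nonneg hadd h_homog hτ₁ hR₁ hP₁ hQ₁
    have h2 := hσ.integral_comp_deriv_le hRc hR hPQ hσL (h := fun x => 𝔥 (-x))
      (hcont.comp continuous_neg) (fun x => h_nonneg _) (fun x y => by rw [neg_add]; exact hadd _ _)
      (fun c hc x => by rw [← smul_neg]; exact h_homog c hc _) hL₂
      (fun t ht => Or.inl (Or.inr ⟨1 - t, ⟨by linarith [ht.2], by linarith [ht.1]⟩, rfl⟩))
      (by simp [hP₂]) (by simp [hQ₂])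
    rw [← hrev, ← hrev] at h2
    simp only [sub_sub_cancel] at h2
    exact add_le_add h1 h2
end

section
/- There exist a function 𝔥 : ℝ² → ℝ which is continuous, positively 1-homogeneous, positive away from 0, continuously differentiable on ℝ² \ {0} and whose unit ball {𝔥 ≤ 1} is strictly convex, together with points A, B, C, B', C' all lying on the unit sphere {v : 𝔥(v) = 1}, such that the unordered pairs {B, C} and {B', C'} are different and both ∇𝔥(A) + ∇𝔥(B) + ∇𝔥(C) = 0 and ∇𝔥(A) + ∇𝔥(B') + ∇𝔥(C') = 0 hold. In particular, for a non-symmetric density a given direction A may belong to more than one admissible triple. -/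
section NormAddInner

variable {E : Type*} [NormedAddCommGroup E] [InnerProductSpace ℝ E]

/-- The support function `v ↦ ‖v‖ + ⟪p, v⟫` of the closed unit ball centred at `p`. -/
noncomputable def normAddInner (p v : E) : ℝ := ‖v‖ + inner ℝ p v

lemma continuous_normAddInner (p : E) : Continuous (normAddInner p) := by
  unfold normAddInner
  fun_prop

lemma normAddInner_smul (p : E) {c : ℝ} (hc : 0 ≤ c) (v : E) :
    normAddInner p (c • v) = c * normAddInner p v := by
  simp only [normAddInner, norm_smul, inner_smul_right, Real.norm_of_nonneg hc]
  ring

lemma normAddInner_pos {p : E} (hp : ‖p‖ < 1) {v : E} (hv : v ≠ 0) : 0 < normAddInner p v := by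
  have h := neg_le_of_abs_le (abs_real_inner_le_norm p v)
  have hv' := norm_pos_iff.mpr hv
  unfold normAddInner
  nlinarith

lemma contDiffOn_normAddInner (p : E) : ContDiffOn ℝ 1 (normAddInner p) {(0 : E)}ᶜ := by
  intro v hv
  have h : ContDiffAt ℝ 1 (fun v : E => ‖v‖) v := contDiffAt_norm ℝ hv
  exact (h.add (contDiffAt_const.inner ℝ contDiffAt_id)).contDiffWithinAt

lemma hasGradientAt_normAddInner [CompleteSpace E] (p : E) {v : E} (hv : v ≠ 0) :
    HasGradientAt (normAddInner p) (‖v‖⁻¹ • v + p) v := by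
  have hv' : ‖v‖ ≠ 0 := norm_ne_zero_iff.mpr hv
  have hs : HasFDerivAt (fun w : E => √(‖w‖ ^ 2)) _ v :=
    (hasStrictFDerivAt_norm_sq v).hasFDerivAt.sqrt (by positivity)
  simp only [Real.sqrt_sq (norm_nonneg _)] at hs
  rw [hasGradientAt_iff_hasFDerivAt]
  refine (hs.add (innerSL ℝ p).hasFDerivAt).congr_fderiv ?_
  ext w
  simp
  field_simp

lemma strictConvex_normAddInner_le_one (p : E) : StrictConvex ℝ {v : E | normAddInner p v ≤ 1} := by
  intro x hx y hy hxy a b ha hb hab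
  rw [Set.mem_ofPred_eq] at hx hy
  have hsub : {v : E | normAddInner p v < 1} ⊆ interior {v : E | normAddInner p v ≤ 1} :=
    interior_maximal (fun v (hv : normAddInner p v < 1) => Set.mem_ofPred_eq ▸ hv.le)
      (isOpen_lt (continuous_normAddInner p) continuous_const)
  apply hsub
  rw [Set.mem_ofPred_eq]
  by_contra! hlt
  have htri := norm_add_le (a • x) (b • y)
  have hax := normAddInner_smul p ha.le x
  have hby := normAddInner_smul p hb.le y
  simp only [normAddInner, inner_add_right] at hlt hax hby hx hy
  have hx1 : ‖x‖ + inner ℝ p x = 1 := by nlinarith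
  have hy1 : ‖y‖ + inner ℝ p y = 1 := by nlinarith
  have hray : SameRay ℝ (a • x) (b • y) := by
    rw [sameRay_iff_norm_add]
    rw [hx1] at hax
    rw [hy1] at hby
    linarith
  have hx0 : x ≠ 0 := by rintro rfl; simp at hx1
  have hy0 : y ≠ 0 := by rintro rfl; simp at hy1
  replace hray : SameRay ℝ x y := by
    simpa [smul_smul, ha.ne', hb.ne'] using
      (hray.pos_smul_left (inv_pos.mpr ha)).pos_smul_right (inv_pos.mpr hb)
  obtain ⟨r, hr, rfl⟩ := hray.exists_pos_left hx0 hy0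
  have hrx := normAddInner_smul p hr.le x
  simp only [normAddInner, hx1, hy1] at hrx
  exact hxy (by rw [← (by linarith : (1 : ℝ) = r), one_smul])

end NormAddInner

/-- There exist a continuous, positively 1-homogeneous `𝔥 : ℝ² → ℝ`,
positive away from `0`, `C¹` on `ℝ² \ {0}`, with strictly convex unit ball `{𝔥 ≤ 1}`,
together with points `A, B, C, B', C'` on the unit sphere `{𝔥 = 1}`, such that the
unordered pairs `{B, C}` and `{B', C'}` differ and both
`∇𝔥 A + ∇𝔥 B + ∇𝔥 C = 0` and `∇𝔥 A + ∇𝔥 B' + ∇𝔥 C' = 0` hold. -/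
theorem statement_8 :
    ∃ (𝔥 : EuclideanSpace ℝ (Fin 2) → ℝ) (A B C B' C' : EuclideanSpace ℝ (Fin 2)),
      Continuous 𝔥 ∧
      (∀ c : ℝ, 0 ≤ c → ∀ v, 𝔥 (c • v) = c * 𝔥 v) ∧
      (∀ v : EuclideanSpace ℝ (Fin 2), v ≠ 0 → 0 < 𝔥 v) ∧
      ContDiffOn ℝ 1 𝔥 {(0 : EuclideanSpace ℝ (Fin 2))}ᶜ ∧
      StrictConvex ℝ {v : EuclideanSpace ℝ (Fin 2) | 𝔥 v ≤ 1} ∧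
      𝔥 A = 1 ∧ 𝔥 B = 1 ∧ 𝔥 C = 1 ∧ 𝔥 B' = 1 ∧ 𝔥 C' = 1 ∧
      ({B', C'} : Set (EuclideanSpace ℝ (Fin 2))) ≠ {B, C} ∧
      gradient 𝔥 A + gradient 𝔥 B + gradient 𝔥 C = 0 ∧
      gradient 𝔥 A + gradient 𝔥 B' + gradient 𝔥 C' = 0 := by
  have hn (x y r : ℝ) (hr : 0 ≤ r) (h : x ^ 2 + y ^ 2 = r ^ 2) : ‖!₂[x, y]‖ = r := by
    simp [EuclideanSpace.norm_eq, h, Real.sqrt_sq hr]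
  have hA := hn (-3 / 2) 0 (3 / 2) (by norm_num) (by norm_num)
  have hB := hn 0 1 1 (by norm_num) (by norm_num)
  have hC := hn 0 (-1) 1 (by norm_num) (by norm_num)
  have hB' := hn (1 / 2) (2 / 3) (5 / 6) (by norm_num) (by norm_num)
  have hC' := hn (-3 / 4) (-1) (5 / 4) (by norm_num) (by norm_num)
  have hp := hn (1 / 3) 0 (1 / 3) (by norm_num) (by norm_num)
  have hg (x y r : ℝ) (hr : 0 < r) (h : ‖!₂[x, y]‖ = r) :
      gradient (normAddInner !₂[1 / 3, 0]) !₂[x, y] = !₂[r⁻¹ * x + 1 / 3, r⁻¹ * y] := by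
    rw [(hasGradientAt_normAddInner _ (norm_pos_iff.mp (h ▸ hr))).gradient, h]
    ext i
    fin_cases i <;> simp
  refine ⟨normAddInner !₂[1 / 3, 0], !₂[-3 / 2, 0], !₂[0, 1], !₂[0, -1], !₂[1 / 2, 2 / 3],
    !₂[-3 / 4, -1], continuous_normAddInner _, fun c hc => normAddInner_smul _ hc,
    fun v => normAddInner_pos (by rw [hp]; norm_num), contDiffOn_normAddInner _,
    strictConvex_normAddInner_le_one _, ?_, ?_, ?_, ?_, ?_, ?_, ?_, ?_⟩
  · rw [normAddInner, hA]; norm_num [PiLp.inner_apply]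
  · rw [normAddInner, hB]; norm_num [PiLp.inner_apply]
  · rw [normAddInner, hC]; norm_num [PiLp.inner_apply]
  · rw [normAddInner, hB']; norm_num [PiLp.inner_apply]
  · rw [normAddInner, hC']; norm_num [PiLp.inner_apply]
  · intro h
    have hmem : !₂[(1 / 2 : ℝ), 2 / 3] ∈ ({!₂[0, 1], !₂[0, -1]} : Set (EuclideanSpace ℝ (Fin 2))) :=
      h ▸ Set.mem_insert _ _
    rcases hmem with h | h <;> simpa using congrArg (fun v => v 0) h
  · rw [hg _ _ _ (by norm_num) hA, hg _ _ _ (by norm_num) hB, hg _ _ _ (by norm_num) hC]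
    ext i
    fin_cases i <;> norm_num
  · rw [hg _ _ _ (by norm_num) hA, hg _ _ _ (by norm_num) hB', hg _ _ _ (by norm_num) hC']
    ext i
    fin_cases i <;> norm_num
end
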